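/- arXiv:1904.07007 — 5 statements merged into one kernel-verified Lean document; each statement's English description precedes it below -/
import Mathlib

section
/- Let β ∈ (1,2) be a multinacci number. Then for every t ∈ [0,1), dim_H(E_β ∩ [t, 1]) = dim_H K_β(t). -/
open Set Filter MeasureTheory

/-- The β-transformation `x ↦ βx (mod 1)`. -/
noncomputable def Tbeta (β x : ℝ) : ℝ := Int.fract (β * x)

/-- The survivor set `K_β(t) = {x ∈ [0,1) : T_β^n x ≥ t for all n ≥ 0}`. -/
def Kset (β t : ℝ) : Set ℝ := {x | x ∈ Set.Ico (0 : ℝ) 1 ∧ ∀ n : ℕ, t ≤ (Tbeta β)^[n] x}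

/-- Strict lexicographic order on sequences of naturals. -/
def seqLt (x y : ℕ → ℕ) : Prop := ∃ n, (∀ i, i < n → x i = y i) ∧ x n < y n

/-- Lexicographic order on sequences of naturals. -/
def seqLe (x y : ℕ → ℕ) : Prop := x = y ∨ seqLt x y

/-- The `n`-th iterate of the left shift. -/
def shiftN (n : ℕ) (x : ℕ → ℕ) : ℕ → ℕ := fun i => x (i + n)

/-- The sequence `w 0^∞`. -/
def wordSeq (w : List ℕ) : ℕ → ℕ := fun i => w.getD i 0

/-- The periodic sequence `w^∞`. -/
def perSeq (w : List ℕ) : ℕ → ℕ := fun i => w.getD (i % w.length) 0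

/-- The sequence obtained by concatenating the word `w` with the sequence `x`. -/
def catSeq (w : List ℕ) (x : ℕ → ℕ) : ℕ → ℕ :=
  fun i => if i < w.length then w.getD i 0 else x (i - w.length)

/-- The greedy β-expansion of `t`: the digit `b_{i+1}` is `⌊β T_β^i t⌋`. -/
noncomputable def greedy (β t : ℝ) : ℕ → ℕ := fun i => (⌊β * (Tbeta β)^[i] t⌋).toNat

/-- `d` is the quasi-greedy β-expansion of `1`: the lexicographically largest
sequence in `{0,1}^ℕ` not ending in `0^∞` whose digits sum to `1` in base `β`. -/
def IsQuasiGreedy (β : ℝ) (d : ℕ → ℕ) : Prop :=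
  (∀ i, d i ≤ 1) ∧ (¬ ∃ N, ∀ n, N ≤ n → d n = 0) ∧
  (∑' i : ℕ, (d i : ℝ) / β ^ (i + 1) = 1) ∧
  ∀ e : ℕ → ℕ, (∀ i, e i ≤ 1) → (¬ ∃ N, ∀ n, N ≤ n → e n = 0) →
    (∑' i : ℕ, (e i : ℝ) / β ^ (i + 1) = 1) → seqLe e d

/-- `s = s_1…s_p` is a β-Lyndon word: `s_{i+1}…s_p ≻ s_1…s_{p-i}` for `1 ≤ i < p`
and `σ^n(s^∞) ≺ δ(β)` for all `n ≥ 0`. -/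
def IsBetaLyndon (β : ℝ) (s : List ℕ) : Prop :=
  s ≠ [] ∧ (∀ a ∈ s, a ≤ 1) ∧
  (∀ i, 1 ≤ i → i < s.length →
    seqLt (wordSeq (s.take (s.length - i))) (wordSeq (s.drop i))) ∧
  (∀ d : ℕ → ℕ, IsQuasiGreedy β d → ∀ n : ℕ, seqLt (shiftN n (perSeq s)) d)

/-- Left endpoint `t_L = Σ_{i=1}^p s_i β^{-i}` of the β-Lyndon interval generated by `s`. -/
noncomputable def lyndonLeft (β : ℝ) (s : List ℕ) : ℝ :=
  ∑ i ∈ Finset.range s.length, (s.getD i 0 : ℝ) / β ^ (i + 1)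

/-- Right endpoint `t_R = (β^p/(β^p - 1)) t_L` of the β-Lyndon interval generated by `s`. -/
noncomputable def lyndonRight (β : ℝ) (s : List ℕ) : ℝ :=
  β ^ s.length / (β ^ s.length - 1) * lyndonLeft β s

/-- The union of all β-Lyndon intervals `[t_L, t_R)`. -/
noncomputable def lyndonUnionIco (β : ℝ) : Set ℝ :=
  ⋃ s ∈ {s : List ℕ | IsBetaLyndon β s}, Set.Ico (lyndonLeft β s) (lyndonRight β s)

/-- The symbolic survivor set `K̃_β(t)` with upper bound sequence `d = δ(β)`. -/
def Ktilde (β t : ℝ) (d : ℕ → ℕ) : Set (ℕ → ℕ) :=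
  {x | (∀ i, x i ≤ 1) ∧ ∀ n : ℕ, seqLe (greedy β t) (shiftN n x) ∧ seqLe (shiftN n x) d}

/-- The set-valued bifurcation set `E_β`. -/
def Eset (β : ℝ) : Set ℝ :=
  {t | t ∈ Set.Ico (0 : ℝ) 1 ∧ ∀ t', t < t' → t' < 1 → Kset β t' ≠ Kset β t}

/-- The dimension bifurcation set `B_β`. -/
def Bset (β : ℝ) : Set ℝ :=
  {t | t ∈ Set.Ico (0 : ℝ) 1 ∧ ∀ t', t < t' → t' < 1 → dimH (Kset β t') ≠ dimH (Kset β t)}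

/-- `β` is a multinacci number: `β^{m+1} = β^m + ⋯ + β + 1` for some `m ≥ 1`. -/
def IsMultinacci (β : ℝ) : Prop :=
  ∃ m : ℕ, 1 ≤ m ∧ β ^ (m + 1) = ∑ i ∈ Finset.range (m + 1), β ^ i

namespace MN

noncomputable def c (b : ℝ) (k : ℕ) : ℝ := ∑ i ∈ Finset.range k, b ^ (i + 1)

noncomputable def g (b : ℝ) (j : ℕ) (z : ℝ) : ℝ := c b j + b ^ (j + 1) * z

noncomputable def P (b : ℝ) : ℕ → (ℕ → ℕ) → ℝ
  | 0, _ => 0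
  | n + 1, s => g b (s 0) (P b n (shiftN 1 s))

noncomputable def pi (b : ℝ) (s : ℕ → ℕ) : ℝ := ⨆ n, P b n s

def len (s : ℕ → ℕ) (d : ℕ) : ℕ := ∑ i ∈ Finset.range d, (s i + 1)

lemma len_succ' (s : ℕ → ℕ) (d : ℕ) : len s (d + 1) = (s 0 + 1) + len (shiftN 1 s) d := by
  unfold len shiftN
  rw [Finset.sum_range_succ', add_comm]

lemma shift_shift (s : ℕ → ℕ) (i j : ℕ) : shiftN i (shiftN j s) = shiftN (i + j) s := by
  funext k; simp [shiftN, add_assoc]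

lemma shift_zero (s : ℕ → ℕ) : shiftN 0 s = s := rfl

lemma c_succ (b : ℝ) (k : ℕ) : c b (k + 1) = c b k + b ^ (k + 1) := by
  simp [c, Finset.sum_range_succ]

lemma c_mul {β : ℝ} (hβ : 0 < β) (k : ℕ) : β * c β⁻¹ (k + 1) = 1 + c β⁻¹ k := by
  induction k with
  | zero => simp [c, hβ.ne']
  | succ k ih =>
    rw [c_succ, mul_add, ih, c_succ, pow_succ (β⁻¹) (k + 1)]
    field_simp
    ring

/-- Parameters. -/
structure Par (b : ℝ) (m : ℕ) : Prop where
  pos : 0 < b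
  lt : b < 1
  hm : 1 ≤ m
  hc : c b (m + 1) = 1

variable {b : ℝ} {m : ℕ}

lemma c_mono (h : Par b m) : Monotone (c b) := by
  refine monotone_nat_of_le_succ fun k => ?_
  rw [c_succ]
  have := pow_pos h.pos (k + 1)
  linarith

lemma c_nonneg (h : Par b m) (k : ℕ) : 0 ≤ c b k := by
  have := c_mono h (Nat.zero_le k)
  simpa [c] using this

lemma g_nonneg (h : Par b m) (j : ℕ) {z : ℝ} (hz : 0 ≤ z) : 0 ≤ g b j z := by
  have := c_nonneg h j
  have := pow_pos h.pos (j + 1)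
  unfold g; positivity

lemma g_le (h : Par b m) (j : ℕ) {z : ℝ} (hz : z ≤ 1) : g b j z ≤ c b (j + 1) := by
  have := pow_pos h.pos (j + 1)
  rw [c_succ]; unfold g; nlinarith

lemma c_le_one (h : Par b m) {j : ℕ} (hj : j ≤ m) : c b (j + 1) ≤ 1 := by
  rw [← h.hc]; exact c_mono h (by omega)

lemma c_lt_one (h : Par b m) {j : ℕ} (hj : j ≤ m) : c b j < 1 := by
  have := c_le_one h hj
  rw [c_succ] at this
  have := pow_pos h.pos (j + 1)
  linarith

lemma g_mono (h : Par b m) (j : ℕ) {z z' : ℝ} (hz : z ≤ z') : g b j z ≤ g b j z' := by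
  have := pow_pos h.pos (j + 1)
  unfold g; nlinarith

lemma g_lt_one (h : Par b m) {j : ℕ} (hj : j ≤ m) {z : ℝ} (hz : z < 1) : g b j z < 1 := by
  have h1 := c_le_one h hj
  rw [c_succ] at h1
  have := pow_pos h.pos (j + 1)
  unfold g; nlinarith

/-- admissible sequence -/
def Adm (m : ℕ) (s : ℕ → ℕ) : Prop := ∀ i, s i ≤ m

lemma Adm.shift {s : ℕ → ℕ} (hs : Adm m s) (k : ℕ) : Adm m (shiftN k s) := fun i => hs (i + k)

lemma P_nonneg (h : Par b m) (n : ℕ) (s : ℕ → ℕ) : 0 ≤ P b n s := by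
  induction n generalizing s with
  | zero => exact le_rfl
  | succ n ih => exact g_nonneg h _ (ih _)

lemma P_le_one (h : Par b m) (n : ℕ) {s : ℕ → ℕ} (hs : Adm m s) : P b n s ≤ 1 := by
  induction n generalizing s with
  | zero => exact zero_le_one
  | succ n ih => exact (g_le h _ (ih (hs.shift 1))).trans (c_le_one h (hs 0))

lemma P_mono (h : Par b m) (s : ℕ → ℕ) : Monotone fun n => P b n s := by
  refine monotone_nat_of_le_succ fun n => ?_
  induction n generalizing s with
  | zero => exact P_nonneg h 1 s
  | succ n ih => exact g_mono h _ (ih _)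

lemma P_tendsto (h : Par b m) {s : ℕ → ℕ} (hs : Adm m s) :
    Tendsto (fun n => P b n s) atTop (nhds (pi b s)) :=
  tendsto_atTop_ciSup (P_mono h s) ⟨1, by rintro _ ⟨n, rfl⟩; exact P_le_one h n hs⟩

lemma pi_eq (h : Par b m) {s : ℕ → ℕ} (hs : Adm m s) :
    pi b s = g b (s 0) (pi b (shiftN 1 s)) := by
  have h1 := (tendsto_add_atTop_iff_nat 1).2 (P_tendsto h hs)
  have h2 := P_tendsto h (hs.shift 1)
  have h3 : Tendsto (fun n => P b (n + 1) s) atTop (nhds (g b (s 0) (pi b (shiftN 1 s)))) := by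
    change Tendsto (fun n => c b (s 0) + b ^ (s 0 + 1) * P b n (shiftN 1 s)) atTop _
    exact (h2.const_mul _).const_add _
  exact tendsto_nhds_unique h1 h3

lemma pi_nonneg (h : Par b m) {s : ℕ → ℕ} (hs : Adm m s) : 0 ≤ pi b s :=
  ge_of_tendsto' (P_tendsto h hs) fun n => P_nonneg h n s

lemma pi_le_one (h : Par b m) {s : ℕ → ℕ} (hs : Adm m s) : pi b s ≤ 1 :=
  le_of_tendsto' (P_tendsto h hs) fun n => P_le_one h n hs

lemma pi_lt_one (h : Par b m) {s : ℕ → ℕ} (hs : Adm m s) (k : ℕ) (hk : s k < m) :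
    pi b s < 1 := by
  induction k generalizing s with
  | zero =>
    rw [pi_eq h hs]
    refine (g_le h _ (pi_le_one h (hs.shift 1))).trans_lt (c_lt_one h ?_)
    omega
  | succ k ih =>
    rw [pi_eq h hs]
    exact g_lt_one h (hs 0) (ih (hs.shift 1) hk)

lemma pi_lower (h : Par b m) {s : ℕ → ℕ} (hs : Adm m s) (k : ℕ) (hk : 1 ≤ s k) :
    b ^ ((m + 1) * (k + 1)) ≤ pi b s := by
  induction k generalizing s with
  | zero =>
    rw [pi_eq h hs]
    have h1 : b ≤ c b (s 0) := by
      have := c_mono h hk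
      simpa [c] using this
    have h2 : b ^ ((m + 1) * (0 + 1)) ≤ b := pow_le_of_le_one h.pos.le h.lt.le (by omega)
    have h3 := pi_nonneg h (hs.shift 1)
    have := pow_pos h.pos (s 0 + 1)
    unfold g
    have : 0 ≤ b ^ (s 0 + 1) * pi b (shiftN 1 s) := by positivity
    linarith
  | succ k ih =>
    rw [pi_eq h hs]
    have h1 := ih (hs.shift 1) hk
    have h2 : b ^ (m + 1) ≤ b ^ (s 0 + 1) :=
      pow_le_pow_of_le_one h.pos.le h.lt.le (by have := hs 0; omega)
    have h3 := c_nonneg h (s 0)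
    have h4 : b ^ ((m + 1) * (k + 1 + 1)) = b ^ (m + 1) * b ^ ((m + 1) * (k + 1)) := by ring
    rw [h4]
    have := mul_le_mul h2 h1 (pow_nonneg h.pos.le _) (pow_nonneg h.pos.le _)
    unfold g; linarith

lemma pi_close (h : Par b m) (d : ℕ) {s s' : ℕ → ℕ} (hs : Adm m s) (hs' : Adm m s')
    (hd : ∀ i < d, s i = s' i) : |pi b s - pi b s'| ≤ b ^ len s d := by
  induction d generalizing s s' with
  | zero =>
    have := pi_nonneg h hs
    have := pi_nonneg h hs'
    have := pi_le_one h hs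
    have := pi_le_one h hs'
    simp only [len, Finset.range_zero, Finset.sum_empty, pow_zero]
    rw [abs_le]; constructor <;> linarith
  | succ d ih =>
    have := ih (hs.shift 1) (hs'.shift 1) (fun i hi => hd (i + 1) (by omega))
    rw [pi_eq h hs, pi_eq h hs', ← hd 0 (by omega), len_succ', pow_add]
    have h1 : g b (s 0) (pi b (shiftN 1 s)) - g b (s 0) (pi b (shiftN 1 s')) =
      b ^ (s 0 + 1) * (pi b (shiftN 1 s) - pi b (shiftN 1 s')) := by unfold g; ring
    rw [h1, abs_mul, abs_of_pos (pow_pos h.pos _)]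
    exact mul_le_mul_of_nonneg_left this (pow_pos h.pos _).le

lemma pi_sep (h : Par b m) (d : ℕ) {s s' : ℕ → ℕ} (hs : Adm m s) (hs' : Adm m s')
    (hd : ∀ i < d, s i = s' i) (hlt : s d < s' d) :
    b ^ len s d * (b ^ (m + 1) * pi b (shiftN (d + 1) s')) ≤ pi b s' - pi b s := by
  induction d generalizing s s' with
  | zero =>
    simp only [len, Finset.range_zero, Finset.sum_empty, pow_zero, one_mul, zero_add]
    rw [pi_eq h hs, pi_eq h hs']
    have h1 := g_le h (s 0) (pi_le_one h (hs.shift 1))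
    have h2 := c_mono h hlt
    have h3 : b ^ (m + 1) ≤ b ^ (s' 0 + 1) :=
      pow_le_pow_of_le_one h.pos.le h.lt.le (by have := hs' 0; omega)
    have h4 := mul_le_mul_of_nonneg_right h3 (pi_nonneg h (hs'.shift 1))
    have h5 : g b (s' 0) (pi b (shiftN 1 s')) = c b (s' 0) + b ^ (s' 0 + 1) * pi b (shiftN 1 s') := rfl
    simp only [Nat.succ_eq_add_one] at h2
    linarith
  | succ d ih =>
    have := ih (hs.shift 1) (hs'.shift 1) (fun i hi => hd (i + 1) (by omega)) hlt
    rw [shift_shift] at this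
    rw [pi_eq h hs, pi_eq h hs', ← hd 0 (by omega), len_succ', pow_add]
    have h1 : g b (s 0) (pi b (shiftN 1 s')) - g b (s 0) (pi b (shiftN 1 s)) =
      b ^ (s 0 + 1) * (pi b (shiftN 1 s') - pi b (shiftN 1 s)) := by unfold g; ring
    rw [h1, mul_assoc]
    exact mul_le_mul_of_nonneg_left this (pow_pos h.pos _).le

lemma pi_lex (h : Par b m) (d : ℕ) {s s' : ℕ → ℕ} (hs : Adm m s) (hs' : Adm m s')
    (hd : ∀ i < d, s i = s' i) (hlt : s d < s' d) : pi b s ≤ pi b s' := by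
  have h1 := pi_sep h d hs hs' hd hlt
  have h2 := pi_nonneg h (hs'.shift (d + 1))
  have := pow_pos h.pos (len s d)
  have := pow_pos h.pos (m + 1)
  have : 0 ≤ b ^ len s d * (b ^ (m + 1) * pi b (shiftN (d + 1) s')) := by positivity
  linarith

lemma pi_const (h : Par b m) {s : ℕ → ℕ} (hs : ∀ i, s i = m) : pi b s = 1 := by
  have hA : Adm m s := fun i => (hs i).le
  have h1 := pi_eq h hA
  have h2 : shiftN 1 s = s := by funext i; simp [shiftN, hs]
  rw [h2, hs 0] at h1
  have h3 := h.hc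
  rw [c_succ] at h3
  have h4 : b ^ (m + 1) < 1 := pow_lt_one₀ h.pos.le h.lt (by omega)
  unfold g at h1
  have : (1 - b ^ (m + 1)) * (pi b s - 1) = 0 := by linear_combination h1 + h3
  rcases mul_eq_zero.1 this with h5 | h5 <;> linarith

/-- coding from a chain of points -/
lemma pi_of_chain (h : Par b m) {s : ℕ → ℕ} (hs : Adm m s) (z : ℕ → ℝ)
    (hz : ∀ i, 0 ≤ z i ∧ z i < 1) (hg : ∀ i, z i = g b (s i) (z (i + 1))) (i : ℕ) :
    pi b (shiftN i s) = z i := by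
  have key : ∀ n i, |pi b (shiftN i s) - z i| ≤ b ^ n := by
    intro n
    induction n with
    | zero =>
      intro i
      have := pi_nonneg h (hs.shift i)
      have := pi_le_one h (hs.shift i)
      have := hz i
      rw [pow_zero, abs_le]; constructor <;> linarith
    | succ n ih =>
      intro i
      have h0 := ih (i + 1)
      rw [pi_eq h (hs.shift i), hg i, shift_shift, add_comm 1 i]
      have e : shiftN i s 0 = s i := by simp [shiftN]
      rw [e]
      have h1 : g b (s i) (pi b (shiftN (i + 1) s)) - g b (s i) (z (i + 1)) =
        b ^ (s i + 1) * (pi b (shiftN (i + 1) s) - z (i + 1)) := by unfold g; ring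
      rw [h1, abs_mul, abs_of_pos (pow_pos h.pos _), pow_succ' b n]
      exact mul_le_mul (pow_le_of_le_one h.pos.le h.lt.le (by omega)) h0 (abs_nonneg _) h.pos.le
  have h2 : |pi b (shiftN i s) - z i| ≤ 0 :=
    ge_of_tendsto' (tendsto_pow_atTop_nhds_zero_of_lt_one h.pos.le h.lt) fun n => key n i
  have := abs_nonpos_iff.1 h2
  linarith

/-! ### dynamics -/

lemma T_mem (β x : ℝ) : 0 ≤ Tbeta β x ∧ Tbeta β x < 1 :=
  ⟨Int.fract_nonneg _, Int.fract_lt_one _⟩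

lemma T_eq {β x y : ℝ} (k : ℕ) (hx : β * x = k + y) (h0 : 0 ≤ y) (h1 : y < 1) :
    Tbeta β x = y := by
  unfold Tbeta
  rw [hx, Int.fract_natCast_add]
  exact Int.fract_eq_self.2 ⟨h0, h1⟩

variable {β : ℝ}

lemma T_g_succ (h : Par β⁻¹ m) {j : ℕ} (hj : j + 1 ≤ m) {z : ℝ} (h0 : 0 ≤ z) (h1 : z < 1) :
    Tbeta β (g β⁻¹ (j + 1) z) = g β⁻¹ j z := by
  have hb : 0 < β := inv_pos.1 h.pos
  refine T_eq 1 ?_ (g_nonneg h _ h0) (g_lt_one h (by omega) h1)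
  unfold g
  rw [mul_add, c_mul hb, pow_succ (β⁻¹) (j + 1)]
  have : β * β⁻¹ = 1 := mul_inv_cancel₀ hb.ne'
  push_cast
  linear_combination (β⁻¹ ^ (j + 1) * z) * this

lemma T_g_zero (h : Par β⁻¹ m) {z : ℝ} (h0 : 0 ≤ z) (h1 : z < 1) :
    Tbeta β (g β⁻¹ 0 z) = z := by
  have hb : 0 < β := inv_pos.1 h.pos
  refine T_eq 0 ?_ h0 h1
  have : β * β⁻¹ = 1 := mul_inv_cancel₀ hb.ne'
  simp only [g, c, Finset.range_zero, Finset.sum_empty]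
  push_cast
  linear_combination z * this

lemma g_zero (b z : ℝ) : g b 0 z = b * z := by simp [g, c]

lemma T_iter (h : Par β⁻¹ m) (n : ℕ) {j : ℕ} (hj : j ≤ m) {s : ℕ → ℕ} (hs : Adm m s)
    (hlt : ∀ k, pi β⁻¹ (shiftN k s) < 1) :
    β⁻¹ ≤ (Tbeta β)^[n] (g β⁻¹ j (pi β⁻¹ s)) ∨
      ∃ k, (Tbeta β)^[n] (g β⁻¹ j (pi β⁻¹ s)) = β⁻¹ * pi β⁻¹ (shiftN k s) := by
  induction n generalizing j s with
  | zero =>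
    rcases j with _ | j
    · right
      exact ⟨0, by simp [g_zero, shift_zero]⟩
    · left
      have h1 : c β⁻¹ 1 ≤ c β⁻¹ (j + 1) := c_mono h (by omega)
      have h2 : c β⁻¹ 1 = β⁻¹ := by simp [c]
      have h3 := pi_nonneg h hs
      have h4 := pow_pos h.pos (j + 1 + 1)
      have : 0 ≤ β⁻¹ ^ (j + 1 + 1) * pi β⁻¹ s := by positivity
      simp only [Function.iterate_zero, id]
      unfold g; linarith
  | succ n ih =>
    rw [Function.iterate_succ_apply]
    have p0 := pi_nonneg h hs
    have p1 : pi β⁻¹ s < 1 := hlt 0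
    rcases j with _ | j
    · rw [T_g_zero h p0 p1, pi_eq h hs]
      rcases ih (hs 0) (hs.shift 1) (fun k => by rw [shift_shift]; exact hlt _) with h1 | ⟨k, h1⟩
      · exact Or.inl h1
      · right
        refine ⟨k + 1, ?_⟩
        rw [h1, shift_shift]
    · rw [T_g_succ h hj p0 p1]
      exact ih (by omega) hs hlt

lemma mem_E (h : Par β⁻¹ m) {s : ℕ → ℕ} (hs : Adm m s)
    (hlt : ∀ k, pi β⁻¹ (shiftN k s) < 1) (hmin : ∀ k, pi β⁻¹ s ≤ pi β⁻¹ (shiftN k s)) :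
    β⁻¹ * pi β⁻¹ s ∈ Eset β := by
  have p0 := pi_nonneg h hs
  have p1 : pi β⁻¹ s < 1 := hlt 0
  have hb := h.pos
  have hb1 := h.lt
  have hx : β⁻¹ * pi β⁻¹ s ∈ Set.Ico (0 : ℝ) 1 := ⟨by positivity, by nlinarith⟩
  refine ⟨hx, fun t' ht _ heq => ?_⟩
  have : β⁻¹ * pi β⁻¹ s ∈ Kset β (β⁻¹ * pi β⁻¹ s) := by
    refine ⟨hx, fun n => ?_⟩
    rcases T_iter h n (Nat.zero_le m) hs hlt with h1 | ⟨k, h1⟩ <;> rw [g_zero] at h1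
    · refine le_trans ?_ h1
      nlinarith
    · rw [h1]
      exact mul_le_mul_of_nonneg_left (hmin k) hb.le
  rw [← heq] at this
  have := this.2 0
  simp only [Function.iterate_zero, id] at this
  linarith

lemma decomp_aux (h : Par β⁻¹ m) (hβ2 : β < 2) {y : ℝ} (h0 : 0 ≤ y) (h1 : y < 1) (k : ℕ) :
    (∃ j < k, ∃ z, 0 ≤ z ∧ z < 1 ∧ y = g β⁻¹ j z ∧ (Tbeta β)^[j] y = β⁻¹ * z ∧
      (Tbeta β)^[j + 1] y = z) ∨ y = c β⁻¹ k + β⁻¹ ^ k * (Tbeta β)^[k] y := by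
  have hb : 0 < β := inv_pos.1 h.pos
  have hbb : β * β⁻¹ = 1 := mul_inv_cancel₀ hb.ne'
  induction k with
  | zero => right; simp [c]
  | succ k ih =>
    rcases ih with ⟨j, hj, hz⟩ | ih
    · exact Or.inl ⟨j, by omega, hz⟩
    have hv : 0 ≤ (Tbeta β)^[k] y ∧ (Tbeta β)^[k] y < 1 := by
      rcases k with _ | k
      · exact ⟨h0, h1⟩
      · rw [Function.iterate_succ_apply']; exact T_mem _ _
    have hT := Function.iterate_succ_apply' (Tbeta β) k y
    set v := (Tbeta β)^[k] y with hvdef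
    by_cases hlt : β * v < 1
    · left
      have hTv : Tbeta β v = β * v := T_eq 0 (by simp) (by have := hv.1; positivity) hlt
      refine ⟨k, by omega, β * v, by have := hv.1; positivity, hlt, ?_, ?_, ?_⟩
      · unfold g
        rw [pow_succ]
        linear_combination ih - (β⁻¹ ^ k * v) * hbb
      · linear_combination (-v) * hbb
      · rw [hT, hTv]
    · right
      have hTv : Tbeta β v = β * v - 1 :=
        T_eq 1 (by push_cast; ring) (by linarith) (by nlinarith [hv.2, hv.1])
      rw [hT, hTv, c_succ, pow_succ]
      linear_combination ih - (β⁻¹ ^ k * v) * hbb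

lemma decomp (h : Par β⁻¹ m) (hβ2 : β < 2) {y : ℝ} (h0 : 0 ≤ y) (h1 : y < 1) :
    ∃ j ≤ m, ∃ z, 0 ≤ z ∧ z < 1 ∧ y = g β⁻¹ j z ∧ (Tbeta β)^[j] y = β⁻¹ * z ∧
      (Tbeta β)^[j + 1] y = z := by
  rcases decomp_aux h hβ2 h0 h1 (m + 1) with ⟨j, hj, hz⟩ | h2
  · exact ⟨j, by omega, hz⟩
  · exfalso
    rw [Function.iterate_succ_apply', h.hc] at h2
    have := (T_mem β ((Tbeta β)^[m] y)).1
    have h3 := pow_pos h.pos (m + 1)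
    have : 0 ≤ β⁻¹ ^ (m + 1) * Tbeta β ((Tbeta β)^[m] y) := by positivity
    linarith

/-- symbolic survivors -/
def A (b : ℝ) (m : ℕ) (u : ℝ) : Set (ℕ → ℕ) :=
  {s | Adm m s ∧ (∀ N, ∃ i, N ≤ i ∧ s i < m) ∧ ∀ i, u ≤ pi b (shiftN i s)}

lemma A_shift {u : ℝ} {s : ℕ → ℕ} (hs : s ∈ A b m u) (k : ℕ) : shiftN k s ∈ A b m u := by
  obtain ⟨h1, h2, h3⟩ := hs
  refine ⟨h1.shift k, fun N => ?_, fun i => ?_⟩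
  · obtain ⟨i, hi, hlt⟩ := h2 (N + k)
    exact ⟨i - k, by omega, by unfold shiftN; rwa [Nat.sub_add_cancel (by omega)]⟩
  · rw [shift_shift]; exact h3 _

lemma K_sub (h : Par β⁻¹ m) (hβ2 : β < 2) (t : ℝ) :
    Kset β t ⊆ ⋃ j : ℕ, g β⁻¹ j '' (pi β⁻¹ '' A β⁻¹ m (β * t)) := by
  have hb : 0 < β := inv_pos.1 h.pos
  have hbb : β * β⁻¹ = 1 := mul_inv_cancel₀ hb.ne'
  let B : Set ℝ := {z | 0 ≤ z ∧ z < 1 ∧ t ≤ β⁻¹ * z ∧ ∀ n, t ≤ (Tbeta β)^[n] z}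
  have step : ∀ y, 0 ≤ y → y < 1 → (∀ n, t ≤ (Tbeta β)^[n] y) →
      ∃ j ≤ m, ∃ z ∈ B, y = g β⁻¹ j z := by
    intro y h0 h1 hT
    obtain ⟨j, hj, z, z0, z1, e1, e2, e3⟩ := decomp h hβ2 h0 h1
    refine ⟨j, hj, z, ⟨z0, z1, e2 ▸ hT j, fun n => ?_⟩, e1⟩
    rw [← e3, ← Function.iterate_add_apply]
    exact hT _
  have step' : ∀ y : B, ∃ j, j ≤ m ∧ ∃ z : B, (y : ℝ) = g β⁻¹ j z := by
    rintro ⟨y, h0, h1, -, h2⟩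
    obtain ⟨j, hj, z, hz, e⟩ := step y h0 h1 h2
    exact ⟨j, hj, ⟨z, hz⟩, e⟩
  choose J hJ Z hZ using step'
  rintro x ⟨⟨x0, x1⟩, hx⟩
  obtain ⟨j, -, z, hz, rfl⟩ := step x x0 x1 hx
  refine Set.mem_iUnion.2 ⟨j, z, ?_, rfl⟩
  let zz : ℕ → B := fun i => Z^[i] ⟨z, hz⟩
  let s : ℕ → ℕ := fun i => J (zz i)
  have hs : Adm m s := fun i => hJ _
  have hpi := pi_of_chain h hs (fun i => (zz i : ℝ)) (fun i => ⟨(zz i).2.1, (zz i).2.2.1⟩)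
    (fun i => by
      have := hZ (zz i)
      simp only [zz, Function.iterate_succ_apply']
      exact this)
  refine ⟨s, ⟨hs, fun N => ?_, fun i => ?_⟩, hpi 0⟩
  · by_contra hcon
    push Not at hcon
    have h1 : pi β⁻¹ (shiftN N s) = 1 :=
      pi_const h fun i => le_antisymm (hs _) (hcon _ (by omega))
    rw [hpi] at h1
    exact absurd h1 (zz N).2.2.1.ne
  · rw [hpi]
    have := (zz i).2.2.2.1
    have := mul_le_mul_of_nonneg_left this hb.le
    rwa [← mul_assoc, hbb, one_mul] at this

/-! ### combinatorics -/

lemma exists_min_prefix {S : Set (ℕ → ℕ)} (hne : S.Nonempty) (n : ℕ) :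
    ∃ e ∈ S, ∀ s ∈ S, ∀ k < n, (∀ i < k, s i = e i) → e k ≤ s k := by
  induction n with
  | zero => obtain ⟨e, he⟩ := hne; exact ⟨e, he, by simp⟩
  | succ n ih =>
    obtain ⟨e, he, hmin⟩ := ih
    have hex : ∃ v, ∃ s ∈ S, (∀ i < n, s i = e i) ∧ s n = v := ⟨_, e, he, fun _ _ => rfl, rfl⟩
    classical
    obtain ⟨s, hs, hse, hsv⟩ := Nat.find_spec hex
    refine ⟨s, hs, fun s' hs' k hk hag => ?_⟩
    rcases Nat.lt_succ_iff_lt_or_eq.1 hk with hk | rfl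
    · rw [hse k hk]
      exact hmin s' hs' k hk fun i hi => by rw [hag i hi, hse i (by omega)]
    · rw [hsv]
      exact Nat.find_min' hex ⟨s', hs', fun i hi => by rw [hag i hi, hse i hi], rfl⟩

lemma exists_min_word {S : Set (ℕ → ℕ)} (hne : S.Nonempty) (hadm : ∀ s ∈ S, Adm m s)
    (htail : ∀ s ∈ S, ∀ N, ∃ i, N ≤ i ∧ s i < m) (n : ℕ) :
    ∃ e ∈ S, ∃ L, n ≤ L ∧ e L < m ∧ ∀ s ∈ S, ∀ k ≤ L, (∀ i < k, s i = e i) → e k ≤ s k := by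
  classical
  obtain ⟨e, he, hmin⟩ := exists_min_prefix hne n
  have hexL : ∃ L, n ≤ L ∧ ∃ s ∈ S, (∀ i < n, s i = e i) ∧ s L < m := by
    obtain ⟨L, hL, hlt⟩ := htail e he n
    exact ⟨L, hL, e, he, fun _ _ => rfl, hlt⟩
  obtain ⟨L, ⟨hnL, s0, hs0, hs0e, hs0lt⟩, hLmin⟩ :
      ∃ L, (n ≤ L ∧ ∃ s ∈ S, (∀ i < n, s i = e i) ∧ s L < m) ∧
        ∀ L' < L, ¬ (n ≤ L' ∧ ∃ s ∈ S, (∀ i < n, s i = e i) ∧ s L' < m) :=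
    ⟨Nat.find hexL, Nat.find_spec hexL, fun L' h => Nat.find_min hexL h⟩
  have hmid : ∀ s ∈ S, (∀ i < n, s i = e i) → ∀ k, n ≤ k → k < L → s k = m := by
    intro s hs hse k hk hkL
    by_contra hne
    exact hLmin k hkL ⟨hk, s, hs, hse, lt_of_le_of_ne (hadm s hs k) hne⟩
  have hexv : ∃ v, ∃ s ∈ S, (∀ i < n, s i = e i) ∧ s L = v := ⟨_, s0, hs0, hs0e, rfl⟩
  obtain ⟨v, ⟨s, hs, hse, hsv⟩, hvmin⟩ :
      ∃ v, (∃ s ∈ S, (∀ i < n, s i = e i) ∧ s L = v) ∧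
        ∀ v', (∃ s ∈ S, (∀ i < n, s i = e i) ∧ s L = v') → v ≤ v' :=
    ⟨Nat.find hexv, Nat.find_spec hexv, fun v' h => Nat.find_min' hexv h⟩
  refine ⟨s, hs, L, hnL, ?_, fun s' hs' k hk hag => ?_⟩
  · rw [hsv]; exact (hvmin _ ⟨s0, hs0, hs0e, rfl⟩).trans_lt hs0lt
  · by_cases hkn : k < n
    · rw [hse k hkn]
      exact hmin s' hs' k hkn fun i hi => by rw [hag i hi, hse i (by omega)]
    · have hs'e : ∀ i < n, s' i = e i := fun i hi => by rw [hag i (by omega), hse i hi]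
      rcases hk.lt_or_eq with hk | rfl
      · rw [hmid s hs hse k (by omega) hk, hmid s' hs' hs'e k (by omega) hk]
      · rw [hsv]; exact hvmin _ ⟨s', hs', hs'e, rfl⟩

/-- insertion of `m` every `n+1` places -/
def ins (m n : ℕ) (x : ℕ → ℕ) : ℕ → ℕ :=
  fun i => if (n + 1) ∣ i then m else x (i - i / (n + 1) - 1)

def pos (n d : ℕ) : ℕ := d + d / n + 1

/-- prefix, then `m`s, then the inserted sequence -/
def big (m n L R : ℕ) (e x : ℕ → ℕ) : ℕ → ℕ :=
  fun i => if i ≤ L then e i else if i ≤ L + R then m else ins m n x (i - (L + R + 1))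

lemma ins_adm {n : ℕ} {x : ℕ → ℕ} (hx : Adm m x) : Adm m (ins m n x) := by
  intro i; unfold ins; split_ifs
  · exact le_rfl
  · exact hx _

lemma big_adm {n L R : ℕ} {e x : ℕ → ℕ} (he : Adm m e) (hx : Adm m x) :
    Adm m (big m n L R e x) := by
  intro i; unfold big; split_ifs
  · exact he _
  · exact le_rfl
  · exact ins_adm hx _

lemma pos_div {n : ℕ} (hn : 1 ≤ n) (d : ℕ) : pos n d / (n + 1) = d / n ∧ ¬ (n + 1) ∣ pos n d := by
  have h1 := Nat.div_add_mod d n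
  have h2 := Nat.mod_lt d hn
  have h3 : pos n d = (d % n + 1) + (n + 1) * (d / n) := by
    unfold pos; nlinarith
  constructor
  · rw [h3, Nat.add_mul_div_left _ _ (by omega), Nat.div_eq_of_lt (by omega)]; omega
  · rw [h3, Nat.dvd_iff_mod_eq_zero, Nat.add_mul_mod_self_left, Nat.mod_eq_of_lt (by omega)]
    omega

lemma ins_pos {n : ℕ} (hn : 1 ≤ n) (x : ℕ → ℕ) (d : ℕ) : ins m n x (pos n d) = x d := by
  obtain ⟨h1, h2⟩ := pos_div hn d
  unfold ins
  rw [if_neg h2, h1]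
  congr 1
  unfold pos; omega

lemma idx_lt {n : ℕ} (hn : 1 ≤ n) {i d : ℕ} (hi : ¬ (n + 1) ∣ i) (hid : i < pos n d) :
    i - i / (n + 1) - 1 < d := by
  have h1 := Nat.div_add_mod d n
  have h2 := Nat.mod_lt d hn
  have h3 := Nat.div_add_mod i (n + 1)
  have h4 := Nat.mod_lt i (show 0 < n + 1 by omega)
  have h5 : i % (n + 1) ≠ 0 := fun h => hi (Nat.dvd_of_mod_eq_zero h)
  unfold pos at hid
  generalize d / n = q at *
  generalize d % n = r at *
  generalize i / (n + 1) = Q at *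
  generalize i % (n + 1) = ρ at *
  have e1 : (n + 1) * Q = n * Q + Q := by ring
  have : i - Q - 1 = n * Q + ρ - 1 := by omega
  rw [this]
  rcases lt_trichotomy Q q with h | h | h
  · have : n * (Q + 1) ≤ n * q := Nat.mul_le_mul_left n h
    have e2 : n * (Q + 1) = n * Q + n := by ring
    omega
  · subst h; omega
  · have : n * (q + 1) ≤ n * Q := Nat.mul_le_mul_left n h
    have e2 : n * (q + 1) = n * q + n := by ring
    omega

lemma ins_window {n i : ℕ} (x : ℕ → ℕ) (hi : ¬ (n + 1) ∣ i) :
    ∃ p q, 1 ≤ q ∧ q ≤ n ∧ (∀ j < q, ins m n x (i + j) = x (p + j)) ∧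
      ∀ j, q ≤ j → ins m n x (i + j) = m ∨ ∃ j', q ≤ j' ∧ j' < j ∧ ins m n x (i + j) = x (p + j') := by
  have h3 := Nat.div_add_mod i (n + 1)
  have h4 := Nat.mod_lt i (show 0 < n + 1 by omega)
  have h5 : i % (n + 1) ≠ 0 := fun h => hi (Nat.dvd_of_mod_eq_zero h)
  set Q := i / (n + 1) with hQ
  set r := i % (n + 1) with hr
  have e1 : (n + 1) * Q = n * Q + Q := by ring
  refine ⟨i - Q - 1, n + 1 - r, by omega, by omega, fun j hj => ?_, fun j hj => ?_⟩
  · have hd : i + j = (r + j) + (n + 1) * Q := by omega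
    have h6 : (i + j) / (n + 1) = Q := by
      rw [hd, Nat.add_mul_div_left _ _ (by omega), Nat.div_eq_of_lt (by omega)]; omega
    have h7 : ¬ (n + 1) ∣ i + j := by
      rw [hd, Nat.dvd_iff_mod_eq_zero, Nat.add_mul_mod_self_left, Nat.mod_eq_of_lt (by omega)]
      omega
    unfold ins
    rw [if_neg h7, h6]
    congr 1; omega
  · unfold ins
    by_cases h7 : (n + 1) ∣ i + j
    · left; rw [if_pos h7]
    right
    rw [if_neg h7]
    have g3 := Nat.div_add_mod (i + j) (n + 1)
    have g4 := Nat.mod_lt (i + j) (show 0 < n + 1 by omega)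
    have g5 : (i + j) % (n + 1) ≠ 0 := fun h => h7 (Nat.dvd_of_mod_eq_zero h)
    set Q' := (i + j) / (n + 1)
    set r' := (i + j) % (n + 1)
    have hQQ : Q + 1 ≤ Q' := by
      by_contra hcon
      have : (n + 1) * Q' ≤ (n + 1) * Q := Nat.mul_le_mul_left _ (by omega)
      omega
    have e2 : (n + 1) * Q' = n * Q' + Q' := by ring
    have e3 : n * (Q + 1) ≤ n * Q' := Nat.mul_le_mul_left _ hQQ
    have e4 : n * (Q + 1) = n * Q + n := by ring
    refine ⟨i + j - Q' - 1 - (i - Q - 1), by omega, by omega, ?_⟩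
    congr 1; omega

/-- general first-difference lemma -/
lemma first_diff {L : ℕ} {e z : ℕ → ℕ} (hex : ∃ k ≤ L, e k ≠ z k)
    (hle : ∀ k ≤ L, (∀ i < k, z i = e i) → e k ≤ z k) :
    ∃ k ≤ L, (∀ i < k, e i = z i) ∧ e k < z k := by
  classical
  obtain ⟨k, ⟨hkL, hne⟩, hmin⟩ : ∃ k, (k ≤ L ∧ e k ≠ z k) ∧ ∀ k' < k, ¬ (k' ≤ L ∧ e k' ≠ z k') :=
    ⟨Nat.find hex, Nat.find_spec hex, fun k' h => Nat.find_min hex h⟩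
  have hag : ∀ i < k, e i = z i := fun i hi => by
    by_contra h
    exact hmin i hi ⟨by omega, h⟩
  exact ⟨k, hkL, hag, lt_of_le_of_ne (hle k hkL fun i hi => (hag i hi).symm) hne⟩

lemma ins_gt {n L i : ℕ} {e x : ℕ → ℕ} (hnL : n ≤ L) (heL : e L < m) (hea : Adm m e)
    (hx : Adm m x)
    (hx2 : ∀ p, ∀ k ≤ L, (∀ i < k, x (p + i) = e i) → e k ≤ x (p + k))
    (hi : ¬ (n + 1) ∣ i) :
    ∃ k ≤ L, (∀ j < k, e j = ins m n x (i + j)) ∧ e k < ins m n x (i + k) := by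
  obtain ⟨p, q, hq1, hqn, hlo, hhi⟩ := ins_window (m := m) x hi
  have key : ∀ k ≤ L, (∀ j < k, ins m n x (i + j) = e j) →
      (q ≤ k → ins m n x (i + k) = m) ∧ ∀ j < k, x (p + j) = e j := by
    intro k
    induction k with
    | zero =>
      intro _ _
      exact ⟨fun h => by omega, fun j hj => by omega⟩
    | succ k ih =>
      intro hk hag
      obtain ⟨ih1, ih2⟩ := ih (by omega) fun j hj => hag j (by omega)
      have h1 : ∀ j < k + 1, x (p + j) = e j := by
        intro j hj
        rcases Nat.lt_succ_iff_lt_or_eq.1 hj with hj | rfl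
        · exact ih2 j hj
        · by_cases hqj : q ≤ j
          · have h2 := ih1 hqj
            have h3 := hag j (by omega)
            have h4 := hx2 p j (by omega) ih2
            have h5 := hx (p + j)
            omega
          · rw [← hlo j (by omega)]; exact hag j (by omega)
      refine ⟨fun hqk => ?_, h1⟩
      rcases hhi (k + 1) hqk with h2 | ⟨j', hj1, hj2, h2⟩
      · exact h2
      · rw [h2, h1 j' hj2]
        -- e j' = m
        have h3 : ∀ j ≤ k, q ≤ j → e j = m := by
          intro j
          induction j using Nat.strong_induction_on with
          | _ j IH =>
            intro hjk hqj
            rw [← hag j (by omega)]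
            rcases hhi j hqj with h4 | ⟨j'', a1, a2, h4⟩
            · exact h4
            · rw [h4, h1 j'' (by omega)]
              exact IH j'' a2 (by omega) a1
        exact h3 j' (by omega) hj1
  refine first_diff (z := fun j => ins m n x (i + j)) ?_ ?_
  · by_contra hcon
    push Not at hcon
    have h1 := (key L le_rfl fun j hj => (hcon j (by omega)).symm).1 (by omega)
    have h2 := hcon L le_rfl
    omega
  · intro k hk hag
    obtain ⟨h1, h2⟩ := key k hk hag
    by_cases hqk : q ≤ k
    · rw [h1 hqk]; exact hea k
    · rw [hlo k (by omega)]
      exact hx2 p k hk h2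

lemma big_gt {n L R i : ℕ} {e x : ℕ → ℕ} (hnL : n ≤ L) (hLR : L ≤ R) (heL : e L < m)
    (hea : Adm m e) (hx : Adm m x)
    (he2 : ∀ p, ∀ k ≤ L, (∀ i < k, e (p + i) = e i) → e k ≤ e (p + k))
    (hx2 : ∀ p, ∀ k ≤ L, (∀ i < k, x (p + i) = e i) → e k ≤ x (p + k)) (hi : 1 ≤ i) :
    ∃ k, (∀ j < k, big m n L R e x j = big m n L R e x (i + j)) ∧
      big m n L R e x k < big m n L R e x (i + k) := by
  have he0 : e 0 < m := by
    have := he2 L 0 (by omega) (by simp)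
    rw [add_zero] at this
    omega
  suffices H : ∃ k ≤ L, (∀ j < k, e j = big m n L R e x (i + j)) ∧
      e k < big m n L R e x (i + k) by
    obtain ⟨k, hk, h1, h2⟩ := H
    have hb : ∀ j ≤ L, big m n L R e x j = e j := fun j hj => by simp [big, hj]
    exact ⟨k, fun j hj => by rw [hb j (by omega)]; exact h1 j hj, by rw [hb k hk]; exact h2⟩
  by_cases hiL : i ≤ L
  · have hm : ∀ j ≤ L, L < i + j → big m n L R e x (i + j) = m := by
      intro j hj h
      unfold big
      rw [if_neg (by omega), if_pos (by omega)]
    have hs : ∀ j, i + j ≤ L → big m n L R e x (i + j) = e (i + j) := by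
      intro j hj; unfold big; rw [if_pos hj]
    refine first_diff (z := fun j => big m n L R e x (i + j)) ⟨L, le_rfl, ?_⟩ ?_
    · simp only [hm L le_rfl (by omega)]; omega
    · intro k hk hag
      by_cases hik : i + k ≤ L
      · rw [hs k hik]
        exact he2 i k hk fun j hj => by rw [← hs j (by omega)]; exact hag j hj
      · rw [hm k hk (by omega)]; exact hea k
  · by_cases hiR : i ≤ L + R
    · refine ⟨0, by omega, by simp, ?_⟩
      unfold big
      rw [if_neg (by omega), if_pos (by omega)]
      exact he0
    · have hs : ∀ j, big m n L R e x (i + j) = ins m n x ((i - (L + R + 1)) + j) := by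
        intro j; unfold big; rw [if_neg (by omega), if_neg (by omega)]
        congr 1; omega
      by_cases hd : (n + 1) ∣ (i - (L + R + 1))
      · refine ⟨0, by omega, by simp, ?_⟩
        rw [hs]
        unfold ins
        rw [add_zero, if_pos hd]
        exact he0
      · obtain ⟨k, hk, h1, h2⟩ := ins_gt hnL heL hea hx hx2 hd
        exact ⟨k, hk, fun j hj => by rw [hs]; exact h1 j hj, by rw [hs]; exact h2⟩

lemma big_tail {n L R : ℕ} (hn : 1 ≤ n) {e x : ℕ → ℕ} (hx : ∀ N, ∃ i, N ≤ i ∧ x i < m) (N : ℕ) :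
    ∃ i, N ≤ i ∧ big m n L R e x i < m := by
  obtain ⟨d, hd, hlt⟩ := hx N
  refine ⟨L + R + 1 + pos n d, ?_, ?_⟩
  · unfold pos; have := Nat.zero_le (d / n); omega
  unfold big
  rw [if_neg (by omega), if_neg (by omega), Nat.add_sub_cancel_left, ins_pos hn]
  exact hlt

/-- length estimate -/
lemma len_add (s : ℕ → ℕ) (p q : ℕ) : len s (p + q) = len s p + len (shiftN p s) q := by
  unfold len shiftN
  rw [Finset.sum_range_add]
  simp [add_comm]

lemma len_succ (s : ℕ → ℕ) (d : ℕ) : len s (d + 1) = len s d + (s d + 1) := by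
  unfold len
  rw [Finset.sum_range_succ]

lemma len_ge (s : ℕ → ℕ) (d : ℕ) : d ≤ len s d := by
  induction d with
  | zero => omega
  | succ d ih => rw [len_succ]; omega

lemma len_le {s : ℕ → ℕ} (hs : Adm m s) (d : ℕ) : len s d ≤ (m + 1) * d := by
  induction d with
  | zero => simp [len]
  | succ d ih => rw [len_succ]; have := hs d; nlinarith

lemma len_ins {n : ℕ} (hn : 1 ≤ n) {x : ℕ → ℕ} (hx : Adm m x) (d : ℕ) :
    len (ins m n x) (pos n d) ≤ len x d + (m + 1) * (d / n + 1) := by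
  induction d with
  | zero =>
    have := len_le (ins_adm (n := n) hx) (pos n 0)
    simpa [pos, len] using this
  | succ d ih =>
    have h0 := ins_pos (m := m) hn x d
    rw [len_succ x]
    have hdiv := Nat.succ_div (a := d) (b := n)
    split_ifs at hdiv with hc
    · have hp : pos n (d + 1) = pos n d + 1 + 1 := by unfold pos; omega
      have := ins_adm (n := n) hx (pos n d + 1)
      rw [hp, len_succ, len_succ, h0, hdiv]
      have e : (m + 1) * (d / n + 1 + 1) = (m + 1) * (d / n + 1) + (m + 1) := by ring
      omega
    · have hp : pos n (d + 1) = pos n d + 1 := by unfold pos; omega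
      rw [hp, len_succ, h0, hdiv]
      simp only [add_zero]
      omega

/-! ### easy direction -/

lemma T_right (β : ℝ) (hβ : 0 < β) (x : ℝ) : ∃ δ > 0, ∀ y, x ≤ y → y < x + δ →
    Tbeta β y = Tbeta β x + β * (y - x) := by
  refine ⟨(1 - Int.fract (β * x)) / β, div_pos (by linarith [Int.fract_lt_one (β * x)]) hβ,
    fun y hxy hy => ?_⟩
  have h1 : β * (y - x) < 1 - Int.fract (β * x) := by
    have : y - x < (1 - Int.fract (β * x)) / β := by linarith
    rw [lt_div_iff₀ hβ] at this
    linarith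
  unfold Tbeta
  rw [Int.fract_eq_iff]
  have h0 := Int.fract_nonneg (β * x)
  have h2 : 0 ≤ β * (y - x) := mul_nonneg hβ.le (by linarith)
  refine ⟨by linarith, by linarith, ⌊β * x⌋, ?_⟩
  have := Int.floor_add_fract (β * x)
  linarith

lemma T_right_iter (β : ℝ) (hβ : 0 < β) (x : ℝ) (n : ℕ) : ∃ δ > 0, ∀ y, x ≤ y → y < x + δ →
    (Tbeta β)^[n] y = (Tbeta β)^[n] x + β ^ n * (y - x) := by
  induction n with
  | zero => exact ⟨1, one_pos, fun y _ _ => by simp⟩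
  | succ n ih =>
    obtain ⟨δ, hδ, h1⟩ := ih
    obtain ⟨η, hη, h2⟩ := T_right β hβ ((Tbeta β)^[n] x)
    have hp := pow_pos hβ n
    refine ⟨min δ (η / β ^ n), lt_min hδ (div_pos hη hp), fun y hxy hy => ?_⟩
    have h3 := h1 y hxy (hy.trans_le (by gcongr; exact min_le_left _ _))
    have h4 : y - x < η / β ^ n := by
      have := min_le_right δ (η / β ^ n)
      linarith
    rw [lt_div_iff₀ hp] at h4
    have h5 : 0 ≤ β ^ n * (y - x) := mul_nonneg hp.le (by linarith)
    rw [Function.iterate_succ_apply', Function.iterate_succ_apply',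
      h2 _ (by rw [h3]; linarith) (by rw [h3]; linarith), h3]
    ring

lemma E_orbit (β : ℝ) (hβ : 0 < β) {s : ℝ} (hs : s ∈ Eset β) (n : ℕ) : s ≤ (Tbeta β)^[n] s := by
  obtain ⟨⟨s0, s1⟩, hs⟩ := hs
  by_contra hcon
  push Not at hcon
  obtain ⟨δ, hδ, h1⟩ := T_right_iter β hβ s n
  have hp := pow_pos hβ n
  set η := (s - (Tbeta β)^[n] s) / β ^ n with hη
  have hη0 : 0 < η := div_pos (by linarith) hp
  obtain ⟨t', ht1, ht2⟩ : ∃ t', s < t' ∧ t' < min 1 (min (s + δ) (s + η)) :=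
    exists_between (lt_min s1 (lt_min (by linarith) (by linarith)))
  obtain ⟨ht3, ht4⟩ := lt_min_iff.1 ht2
  obtain ⟨ht4, ht5⟩ := lt_min_iff.1 ht4
  refine hs t' ht1 ht3 (Set.Subset.antisymm ?_ ?_)
  · rintro x ⟨hx, hx2⟩
    exact ⟨hx, fun k => ht1.le.trans (hx2 k)⟩
  · rintro x ⟨hx, hx2⟩
    refine ⟨hx, fun k => ?_⟩
    by_contra hlt
    push Not at hlt
    have h2 := h1 _ (hx2 k) (hlt.trans ht4)
    have h3 := hx2 (n + k)
    rw [Function.iterate_add_apply, h2] at h3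
    have h4 : (Tbeta β)^[k] x - s < η := by linarith
    rw [hη, lt_div_iff₀ hp] at h4
    linarith

lemma E_sub (β : ℝ) (hβ : 0 < β) (t : ℝ) : Eset β ∩ Set.Icc t 1 ⊆ Kset β t := by
  rintro s ⟨hs, hst, -⟩
  exact ⟨hs.1, fun n => hst.trans (E_orbit β hβ hs n)⟩

/-! ### dimension -/

lemma dim_rel {S : Set (ℕ → ℕ)} (F G : (ℕ → ℕ) → ℝ) (C : ℝ) (hC : 0 ≤ C) (r : NNReal) (hr : 0 < r)
    (h : ∀ x ∈ S, ∀ y ∈ S, |G x - G y| ≤ C * |F x - F y| ^ (r : ℝ)) :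
    dimH (G '' S) ≤ dimH (F '' S) / r := by
  classical
  have hr' : (r : ℝ) ≠ 0 := by exact_mod_cast hr.ne'
  let D : ℝ → ℝ := fun p => G (Function.invFunOn F S p)
  have hD : HolderOnWith C.toNNReal r D (F '' S) := by
    intro p hp q hq
    have hp1 := Function.invFunOn_mem hp
    have hp2 := Function.invFunOn_eq hp
    have hq1 := Function.invFunOn_mem hq
    have hq2 := Function.invFunOn_eq hq
    have := h _ hp1 _ hq1
    rw [hp2, hq2] at this
    rw [edist_dist, edist_dist, Real.dist_eq, Real.dist_eq,
      ENNReal.ofReal_rpow_of_nonneg (abs_nonneg _) r.coe_nonneg]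
    change _ ≤ ENNReal.ofReal C * _
    rw [← ENNReal.ofReal_mul hC]
    exact ENNReal.ofReal_le_ofReal this
  refine le_trans (dimH_mono ?_) (hD.dimH_image_le hr)
  rintro _ ⟨x, hx, rfl⟩
  have hp : F x ∈ F '' S := ⟨x, hx, rfl⟩
  refine ⟨F x, hp, ?_⟩
  have h1 := h _ (Function.invFunOn_mem hp) _ hx
  rw [Function.invFunOn_eq hp, sub_self, abs_zero, Real.zero_rpow hr', mul_zero] at h1
  have := abs_nonpos_iff.1 h1
  change G _ = _
  linarith

lemma main_step (h : Par β⁻¹ m) {t : ℝ} (n : ℕ) (hn : 1 ≤ n)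
    (hne : (A β⁻¹ m (β * t)).Nonempty) :
    dimH (pi β⁻¹ '' A β⁻¹ m (β * t)) ≤
      dimH (Eset β ∩ Set.Icc t 1) / (((n : NNReal) / (n + (m + 1) : NNReal) : NNReal)) := by
  have hb := h.pos
  have hb1 := h.lt
  have hbeta : 0 < β := inv_pos.1 h.pos
  have hbb : β⁻¹ * β = 1 := inv_mul_cancel₀ hbeta.ne'
  set b := β⁻¹ with hbdef
  obtain ⟨e, he, L, hnL, heL, hmin⟩ := exists_min_word hne (fun s hs => hs.1)
    (fun s hs => hs.2.1) n
  obtain ⟨i0, hi0, hi0lt⟩ := he.2.1 (L + 1)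
  obtain ⟨R, hLR, hi0R, hR1⟩ : ∃ R, L ≤ R ∧ i0 ≤ L + R ∧ 1 ≤ R :=
    ⟨L + i0, by omega, by omega, by omega⟩
  have hsh : ∀ s ∈ A b m (β * t), ∀ p, ∀ k ≤ L, (∀ i < k, s (p + i) = e i) → e k ≤ s (p + k) := by
    intro s hs p k hk hag
    have := hmin _ (A_shift hs p) k hk (fun i hi => by
      rw [← hag i hi]; simp [shiftN, add_comm])
    simpa [shiftN, add_comm] using this
  set Y : (ℕ → ℕ) → (ℕ → ℕ) := big m n L R e with hY
  have hYadm : ∀ x ∈ A b m (β * t), Adm m (Y x) := fun x hx => big_adm he.1 hx.1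
  have hYmin : ∀ x ∈ A b m (β * t), ∀ i, pi b (Y x) ≤ pi b (shiftN i (Y x)) := by
    intro x hx i
    rcases Nat.eq_zero_or_pos i with rfl | hi
    · exact le_rfl
    · obtain ⟨k, h1, h2⟩ := big_gt (x := x) hnL hLR heL he.1 hx.1 (hsh e he) (hsh x hx) hi
      refine pi_lex h k (hYadm x hx) ((hYadm x hx).shift i) (fun j hj => ?_) ?_
      · rw [hY, h1 j hj]; simp [shiftN, add_comm]
      · have : shiftN i (Y x) k = Y x (i + k) := by simp [shiftN, add_comm]
        rw [this]; exact h2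
  have hYlt : ∀ x ∈ A b m (β * t), ∀ k, pi b (shiftN k (Y x)) < 1 := by
    intro x hx k
    obtain ⟨i, hi, hlt⟩ := big_tail (n := n) (L := L) (R := R) (e := e) hn hx.2.1 k
    refine pi_lt_one h ((hYadm x hx).shift k) (i - k) ?_
    unfold shiftN; rwa [Nat.sub_add_cancel hi]
  have hYge : ∀ x ∈ A b m (β * t), β * t ≤ pi b (Y x) := by
    intro x hx
    refine (he.2.2 0).trans ?_
    rw [shift_zero]
    have hYm : ∀ k, L < k → k ≤ L + R → Y x k = m := by
      intro k h1 h2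
      simp only [hY, big]
      rw [if_neg (by omega), if_pos h2]
    have hYe : ∀ k ≤ L, Y x k = e k := by
      intro k h1
      simp only [hY, big]
      rw [if_pos h1]
    obtain ⟨k, hk, h1, h2⟩ := first_diff (L := L + R) (e := e) (z := Y x)
      ⟨i0, hi0R, by rw [hYm i0 (by omega) hi0R]; omega⟩
      (fun k hk _ => by
        by_cases hkL : k ≤ L
        · rw [hYe k hkL]
        · rw [hYm k (by omega) hk]; exact he.1 k)
    exact pi_lex h k he.1 (hYadm x hx) h1 h2
  have hYlow : ∀ x ∈ A b m (β * t), ∀ i, b ^ ((m + 1) * (L + 1 + 1)) ≤ pi b (shiftN i (Y x)) := by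
    intro x hx i
    refine le_trans (pi_lower h (hYadm x hx) (L + 1) ?_) (hYmin x hx i)
    simp only [hY, big]
    rw [if_neg (by omega), if_pos (by omega)]
    exact h.hm
  let F : (ℕ → ℕ) → ℝ := fun x => b * pi b (Y x)
  obtain ⟨C1, hC1⟩ : ∃ C1, C1 = 1 + (m + 1) * (L + R + 1) + (m + 1) + (m + 1) +
    (m + 1) * (L + 1 + 1) := ⟨_, rfl⟩
  have est : ∀ x ∈ A b m (β * t), ∀ x' ∈ A b m (β * t), ∀ d, (∀ i < d, x i = x' i) → x d < x' d →
      b ^ (C1 + len x d + (m + 1) * (d / n)) ≤ |F x - F x'| := by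
    intro x hx x' hx' d hag hlt
    have hYins : ∀ x, ∀ i, Y x (L + R + 1 + i) = ins m n x i := by
      intro x i
      simp only [hY, big]
      rw [if_neg (by omega), if_neg (by omega), Nat.add_sub_cancel_left]
    have h1 : ∀ i < L + R + 1 + pos n d, Y x i = Y x' i := by
      intro i hi
      by_cases hiL : i < L + R + 1
      · simp only [hY, big]
        split_ifs
        · rfl
        · rfl
        · omega
      · obtain ⟨k, rfl⟩ := Nat.exists_eq_add_of_le (not_lt.1 hiL)
        rw [hYins, hYins]
        unfold ins
        split_ifs with hdv
        · rfl
        · exact hag _ (idx_lt hn hdv (by omega))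
    have h2 : Y x (L + R + 1 + pos n d) < Y x' (L + R + 1 + pos n d) := by
      rw [hYins, hYins, ins_pos hn, ins_pos hn]; exact hlt
    have h3 := pi_sep h _ (hYadm x hx) (hYadm x' hx') h1 h2
    have h4 := hYlow x' hx' (L + R + 1 + pos n d + 1)
    have h5 : len (Y x) (L + R + 1 + pos n d) ≤
        (m + 1) * (L + R + 1) + (len x d + (m + 1) * (d / n + 1)) := by
      rw [len_add]
      refine add_le_add (len_le (hYadm x hx) _) ?_
      have : shiftN (L + R + 1) (Y x) = ins m n x := by
        funext i; rw [← hYins]; simp [shiftN, add_comm]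
      rw [this]
      exact len_ins hn hx.1 d
    have h6 : b ^ ((m + 1) * (L + R + 1) + (len x d + (m + 1) * (d / n + 1))) ≤
        b ^ len (Y x) (L + R + 1 + pos n d) := pow_le_pow_of_le_one hb.le hb1.le h5
    have h7 : b ^ (C1 + len x d + (m + 1) * (d / n)) =
        b * (b ^ ((m + 1) * (L + R + 1) + (len x d + (m + 1) * (d / n + 1))) *
          (b ^ (m + 1) * b ^ ((m + 1) * (L + 1 + 1)))) := by
      rw [hC1]; ring
    rw [h7, abs_sub_comm]
    refine le_trans ?_ (le_abs_self _)
    change _ ≤ b * pi b (Y x') - b * pi b (Y x)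
    rw [← mul_sub]
    refine mul_le_mul_of_nonneg_left (le_trans ?_ h3) hb.le
    have := pow_pos hb (m + 1)
    exact mul_le_mul h6 (mul_le_mul_of_nonneg_left h4 this.le) (by positivity) (by positivity)
  have hr0 : (0 : NNReal) < (n : NNReal) / (n + (m + 1) : NNReal) := by
    have : (0 : NNReal) < n := by exact_mod_cast hn
    positivity
  set r : NNReal := (n : NNReal) / (n + (m + 1) : NNReal) with hrdef
  have hrR : (r : ℝ) = (n : ℝ) / (n + (m + 1)) := by rw [hrdef]; push_cast; rfl
  have hnR : (1 : ℝ) ≤ n := by exact_mod_cast hn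
  have est2 : ∀ x ∈ A b m (β * t), ∀ x' ∈ A b m (β * t), ∀ d, (∀ i < d, x i = x' i) → x d < x' d →
      |pi b x - pi b x'| ≤ (b ^ C1)⁻¹ * |F x - F x'| ^ (r : ℝ) := by
    intro x hx x' hx' d hag hlt
    have h1 := est x hx x' hx' d hag hlt
    have h2 := pi_close h d hx.1 hx'.1 hag
    refine h2.trans ?_
    have h3 : b ^ (C1 + len x d) ≤ |F x - F x'| ^ (r : ℝ) := by
      have h4 := Real.rpow_le_rpow (by positivity) h1 r.2
      refine le_trans ?_ h4
      rw [← Real.rpow_natCast, ← Real.rpow_natCast, ← Real.rpow_mul hb.le]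
      refine Real.rpow_le_rpow_of_exponent_ge hb hb1.le ?_
      change _ * (r : ℝ) ≤ _
      rw [hrR, mul_div_assoc', div_le_iff₀ (by positivity)]
      have h5 : d / n * n ≤ len x d := (Nat.div_mul_le_self d n).trans (len_ge x d)
      have h6 : ((d / n : ℕ) : ℝ) * n ≤ len x d := by exact_mod_cast h5
      push_cast
      have h7 : (0 : ℝ) ≤ C1 := by positivity
      have h8 : (0 : ℝ) ≤ m := by positivity
      nlinarith [mul_nonneg h7 h8, mul_le_mul_of_nonneg_left h6 h8]
    have h4 := pow_pos hb C1
    rw [← div_eq_inv_mul, le_div_iff₀ h4]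
    rw [pow_add] at h3
    linarith
  have est3 : ∀ x ∈ A b m (β * t), ∀ x' ∈ A b m (β * t),
      |pi b x - pi b x'| ≤ (b ^ C1)⁻¹ * |F x - F x'| ^ (r : ℝ) := by
    intro x hx x' hx'
    by_cases hxx : x = x'
    · subst hxx
      rw [sub_self, abs_zero]
      have := pow_pos hb C1
      positivity
    · have hex : ∃ d, x d ≠ x' d := Function.ne_iff.1 hxx
      classical
      obtain ⟨d, hd, hdm⟩ : ∃ d, x d ≠ x' d ∧ ∀ i < d, ¬ x i ≠ x' i :=
        ⟨Nat.find hex, Nat.find_spec hex, fun i hi => Nat.find_min hex hi⟩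
      have hag : ∀ i < d, x i = x' i := fun i hi => not_not.1 (hdm i hi)
      rcases lt_or_gt_of_ne hd with hlt | hlt
      · exact est2 x hx x' hx' d hag hlt
      · rw [abs_sub_comm, abs_sub_comm (F x)]
        exact est2 x' hx' x hx d (fun i hi => (hag i hi).symm) hlt
  refine (dim_rel F (pi b) _ (inv_nonneg.2 (pow_pos hb C1).le) r hr0 est3).trans ?_
  refine ENNReal.div_le_div_right (dimH_mono ?_) _
  rintro _ ⟨x, hx, rfl⟩
  have hE := mem_E h (hYadm x hx) (hYlt x hx) (hYmin x hx)
  refine ⟨hE, ?_, hE.1.2.le⟩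
  have h1 := mul_le_mul_of_nonneg_left (hYge x hx) hb.le
  rwa [← mul_assoc, hbb, one_mul] at h1

lemma Kset_dim (h : Par β⁻¹ m) (hβ2 : β < 2) (t : ℝ) :
    dimH (Kset β t) ≤ dimH (pi β⁻¹ '' A β⁻¹ m (β * t)) := by
  refine (dimH_mono (K_sub h hβ2 t)).trans ?_
  rw [dimH_iUnion]
  refine iSup_le fun j => ?_
  have hl : LipschitzWith (β⁻¹ ^ (j + 1)).toNNReal (g β⁻¹ j) := by
    refine LipschitzWith.of_dist_le_mul fun x y => ?_
    rw [Real.coe_toNNReal _ (pow_pos h.pos _).le, Real.dist_eq, Real.dist_eq]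
    have : g β⁻¹ j x - g β⁻¹ j y = β⁻¹ ^ (j + 1) * (x - y) := by unfold g; ring
    rw [this, abs_mul, abs_of_pos (pow_pos h.pos _)]
  exact hl.dimH_image_le _

lemma main_le (h : Par β⁻¹ m) (hβ2 : β < 2) (t : ℝ) :
    dimH (Kset β t) ≤ dimH (Eset β ∩ Set.Icc t 1) := by
  refine (Kset_dim h hβ2 t).trans ?_
  rcases (A β⁻¹ m (β * t)).eq_empty_or_nonempty with he | hne
  · rw [he, Set.image_empty, dimH_empty]; exact zero_le
  have hlim : Tendsto (fun n : ℕ => (((n : NNReal) / (n + (m + 1) : NNReal) : NNReal) : ENNReal))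
      atTop (nhds ((1 : NNReal) : ENNReal)) := by
    rw [ENNReal.tendsto_coe, ← NNReal.tendsto_coe]
    have := tendsto_natCast_div_add_atTop ((m : ℝ) + 1)
    simpa using this
  have h2 := ENNReal.Tendsto.const_mul (a := dimH (pi β⁻¹ '' A β⁻¹ m (β * t))) hlim
    (Or.inl (by simp))
  rw [ENNReal.coe_one, mul_one] at h2
  refine le_of_tendsto h2 ?_
  filter_upwards [eventually_ge_atTop 1] with n hn
  exact ENNReal.mul_le_of_le_div (main_step h n hn hne)

lemma par_of_multi (hβ : β ∈ Set.Ioo (1 : ℝ) 2) (hmulti : IsMultinacci β) : ∃ m, Par β⁻¹ m := by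
  obtain ⟨m, hm, he⟩ := hmulti
  have hb : 0 < β := by linarith [hβ.1]
  refine ⟨m, inv_pos.2 hb, inv_lt_one_of_one_lt₀ hβ.1, hm, ?_⟩
  have h1 : β ^ (m + 1) * c β⁻¹ (m + 1) = β ^ (m + 1) := by
    conv_rhs => rw [he]
    rw [c, Finset.mul_sum, ← Finset.sum_range_reflect]
    refine Finset.sum_congr rfl fun i hi => ?_
    have hi := Finset.mem_range.1 hi
    have e1 : β ^ (m + 1) = β ^ i * β ^ (m + 1 - 1 - i + 1) := by
      rw [← pow_add]; congr 1; omega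
    rw [e1, inv_pow, mul_assoc, mul_inv_cancel₀ (pow_pos hb _).ne', mul_one]
  have := pow_pos hb (m + 1)
  exact mul_left_cancel₀ this.ne' (by rw [h1, mul_one])

end MN

/-- For a multinacci `β ∈ (1,2)` and every `t ∈ [0,1)`,
`dim_H (E_β ∩ [t,1]) = dim_H K_β(t)`. -/
theorem stmt_3 (β : ℝ) (hβ : β ∈ Set.Ioo (1 : ℝ) 2) (hmulti : IsMultinacci β) :
    ∀ t ∈ Set.Ico (0 : ℝ) 1,
      dimH (Eset β ∩ Set.Icc t 1) = dimH (Kset β t) := by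
  intro t _
  obtain ⟨m, h⟩ := MN.par_of_multi hβ hmulti
  exact le_antisymm (dimH_mono (MN.E_sub β (by linarith [hβ.1]) t)) (MN.main_le h hβ.2 t)
end

section
/- Let β ∈ (1,2) with δ(β) = (1^m 0)^∞ for some m ≥ 1, and let [t_L, t_R) ⊂ [0, 1 − 1/β) be a β-Lyndon interval. Then the set-valued map t ↦ K̃_β(t) is constant on [t_L, t_R]; in particular K̃_β(t) = K̃_β(t_L) = K̃_β(t_R) for every t ∈ [t_L, t_R]. -/
open Set Filter MeasureTheory

lemma seqLe_total' (x y : ℕ → ℕ) : seqLe x y ∨ seqLt y x := by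
  by_cases h : x = y
  · exact Or.inl (Or.inl h)
  · have h' : ∃ n, x n ≠ y n := by
      by_contra hc
      push Not at hc
      exact h (funext hc)
    classical
    have h1 := Nat.find_spec h'
    have h2 : ∀ i, i < Nat.find h' → x i = y i := fun i hi => by
      have := Nat.find_min h' hi
      simpa using this
    rcases lt_or_gt_of_ne h1 with h3 | h3
    · exact Or.inl (Or.inr ⟨_, h2, h3⟩)
    · exact Or.inr ⟨_, fun i hi => (h2 i hi).symm, h3⟩

lemma seqLt_trans' {x y z : ℕ → ℕ} (h1 : seqLt x y) (h2 : seqLt y z) : seqLt x z := by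
  obtain ⟨n, hn, hn'⟩ := h1
  obtain ⟨k, hk, hk'⟩ := h2
  rcases lt_trichotomy n k with h | h | h
  · exact ⟨n, fun i hi => (hn i hi).trans (hk i (hi.trans h)), by rw [← hk n h]; exact hn'⟩
  · subst h
    exact ⟨n, fun i hi => (hn i hi).trans (hk i hi), hn'.trans hk'⟩
  · exact ⟨k, fun i hi => (hn i (hi.trans h)).trans (hk i hi), by rw [hn k h]; exact hk'⟩

lemma seqLt_irrefl' {x : ℕ → ℕ} (h : seqLt x x) : False := by
  obtain ⟨n, _, h⟩ := h
  exact lt_irrefl _ h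

lemma seqLe_trans' {x y z : ℕ → ℕ} (h1 : seqLe x y) (h2 : seqLe y z) : seqLe x z := by
  rcases h1 with rfl | h1
  · exact h2
  · rcases h2 with rfl | h2
    · exact Or.inr h1
    · exact Or.inr (seqLt_trans' h1 h2)

lemma seqLe_lt_trans' {x y z : ℕ → ℕ} (h1 : seqLe x y) (h2 : seqLt y z) : seqLt x z := by
  rcases h1 with rfl | h1
  · exact h2
  · exact seqLt_trans' h1 h2

lemma seqLe_of_le' {x y : ℕ → ℕ} (h : ∀ i, x i ≤ y i) : seqLe x y := by
  rcases seqLe_total' x y with h1 | ⟨n, _, hn⟩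
  · exact h1
  · exact absurd (h n) (not_le.mpr hn)

/-- value of a sequence -/
noncomputable def Vv (β : ℝ) (c : ℕ → ℕ) : ℝ := ∑' i : ℕ, (c i : ℝ) / β ^ (i + 1)

lemma Vv_summable {β : ℝ} (hβ : 1 < β) {c : ℕ → ℕ} (hc : ∀ i, c i ≤ 1) :
    Summable (fun i : ℕ => (c i : ℝ) / β ^ (i + 1)) := by
  have h0 : 0 < β := by linarith
  have hg : Summable (fun i : ℕ => (β⁻¹) ^ i) :=
    summable_geometric_of_lt_one (by positivity) (inv_lt_one_of_one_lt₀ hβ)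
  refine Summable.of_nonneg_of_le (fun i => by positivity) (fun i => ?_) hg
  have h1 : (c i : ℝ) ≤ 1 := by exact_mod_cast hc i
  rw [inv_pow, div_eq_mul_inv]
  have h2 : (β ^ (i+1))⁻¹ ≤ (β ^ i)⁻¹ := by
    apply inv_anti₀ (by positivity)
    exact pow_le_pow_right₀ hβ.le (Nat.le_succ i)
  have h3 : 0 ≤ (β ^ (i+1))⁻¹ := by positivity
  nlinarith

lemma Vv_nonneg {β : ℝ} (hβ : 1 < β) (c : ℕ → ℕ) : 0 ≤ Vv β c := by
  have h0 : 0 < β := by linarith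
  exact tsum_nonneg fun i => by positivity

lemma Vv_split {β : ℝ} (hβ : 1 < β) {c : ℕ → ℕ} (hc : ∀ i, c i ≤ 1) (k : ℕ) :
    Vv β c = ∑ i ∈ Finset.range k, (c i : ℝ) / β ^ (i + 1) + Vv β (shiftN k c) / β ^ k := by
  have h0 : 0 < β := by linarith
  unfold Vv
  rw [← (Vv_summable hβ hc).sum_add_tsum_nat_add k, ← tsum_div_const]
  congr 1
  apply tsum_congr
  intro i
  simp only [shiftN]
  rw [div_div, ← pow_add]
  congr 2
  ring

lemma Vv_pos {β : ℝ} (hβ : 1 < β) {c : ℕ → ℕ} (hc : ∀ i, c i ≤ 1) {n : ℕ} (hn : c n ≠ 0) :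
    0 < Vv β c := by
  have h0 : 0 < β := by linarith
  refine (Vv_summable hβ hc).tsum_pos (fun i => by positivity) n ?_
  have : 0 < c n := Nat.pos_of_ne_zero hn
  positivity

lemma Vv_step {β : ℝ} (hβ : 1 < β) {c : ℕ → ℕ} (hc : ∀ i, c i ≤ 1) {d : ℕ → ℕ}
    (hd : IsQuasiGreedy β d) (h : seqLt c d) :
    ∃ k, Vv β c - 1 < (Vv β (shiftN (k+1) c) - 1) / β ^ (k+1) := by
  have h0 : 0 < β := by linarith
  obtain ⟨k, hk, hk'⟩ := h
  refine ⟨k, ?_⟩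
  obtain ⟨hd1, hd2, hd3, _⟩ := hd
  have hd3' : Vv β d = 1 := hd3
  have hdk : d k = 1 := by have := hd1 k; omega
  have hck : c k = 0 := by have := hd1 k; omega
  have hpos : 0 < Vv β (shiftN (k+1) d) := by
    push Not at hd2
    obtain ⟨n, hn, hn'⟩ := hd2 (k+1)
    refine Vv_pos hβ (fun i => hd1 _) (n := n - (k+1)) ?_
    simp only [shiftN]
    rwa [Nat.sub_add_cancel hn]
  have e1 := Vv_split hβ hc (k+1)
  have e2 := Vv_split hβ hd1 (k+1)
  rw [Finset.sum_range_succ] at e1 e2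
  have e3 : ∑ i ∈ Finset.range k, (c i : ℝ) / β ^ (i + 1)
      = ∑ i ∈ Finset.range k, (d i : ℝ) / β ^ (i + 1) :=
    Finset.sum_congr rfl fun i hi => by rw [hk i (Finset.mem_range.mp hi)]
  rw [hdk, hd3'] at e2
  rw [hck, e3] at e1
  have : 0 < Vv β (shiftN (k+1) d) / β ^ (k+1) := by positivity
  rw [sub_div]
  push_cast at *
  rw [zero_div] at e1
  linarith

lemma shiftN_shiftN' (a b : ℕ) (x : ℕ → ℕ) : shiftN a (shiftN b x) = shiftN (b + a) x := by
  funext i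
  simp only [shiftN]
  congr 1
  ring

lemma Vv_le {β : ℝ} (hβ : 1 < β) {c : ℕ → ℕ} (hc : ∀ i, c i ≤ 1) :
    Vv β c ≤ Vv β (fun _ => 1) := by
  have h0 : 0 < β := by linarith
  refine (Vv_summable hβ hc).tsum_le_tsum (fun i => ?_) (Vv_summable hβ (fun _ => le_rfl))
  have : (c i : ℝ) ≤ ((1:ℕ):ℝ) := by exact_mod_cast hc i
  gcongr

lemma Vv_lt_one {β : ℝ} (hβ : 1 < β) {c : ℕ → ℕ} (hc : ∀ i, c i ≤ 1) {d : ℕ → ℕ}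
    (hd : IsQuasiGreedy β d) (h : ∀ n, seqLt (shiftN n c) d) (n : ℕ) :
    Vv β (shiftN n c) < 1 := by
  have h0 : 0 < β := by linarith
  set C := Vv β (fun _ => 1) with hC
  have hC0 : 0 ≤ C := Vv_nonneg hβ _
  have step : ∀ n, ∃ k, Vv β (shiftN n c) - 1 < (Vv β (shiftN (n + (k+1)) c) - 1) / β ^ (k+1) := by
    intro n
    obtain ⟨k, hk⟩ := Vv_step hβ (c := shiftN n c) (fun i => hc _) hd (h n)
    rw [shiftN_shiftN'] at hk
    exact ⟨k, hk⟩
  have key : ∀ j n, Vv β (shiftN n c) - 1 ≤ C / β ^ j := by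
    intro j
    induction j with
    | zero =>
      intro n
      have := Vv_le hβ (c := shiftN n c) (fun i => hc _)
      simp
      linarith
    | succ j ih =>
      intro n
      obtain ⟨k, hk⟩ := step n
      refine hk.le.trans ?_
      have h1 := ih (n + (k+1))
      calc (Vv β (shiftN (n + (k+1)) c) - 1) / β ^ (k+1) ≤ (C / β ^ j) / β ^ (k+1) := by gcongr
        _ ≤ (C / β ^ j) / β ^ 1 := by
            gcongr
            · exact hβ.le
            · omega
        _ = C / β ^ (j+1) := by rw [div_div, ← pow_add]
  have hle : ∀ n, Vv β (shiftN n c) - 1 ≤ 0 := by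
    intro n
    have ht : Filter.Tendsto (fun j : ℕ => C / β ^ j) Filter.atTop (nhds 0) :=
      Filter.Tendsto.div_atTop tendsto_const_nhds (tendsto_pow_atTop_atTop_of_one_lt hβ)
    exact ge_of_tendsto' ht (fun j => key j n)
  obtain ⟨k, hk⟩ := step n
  have : (Vv β (shiftN (n + (k+1)) c) - 1) / β ^ (k+1) ≤ 0 :=
    div_nonpos_of_nonpos_of_nonneg (hle _) (by positivity)
  linarith

lemma greedy_Vv {β : ℝ} (hβ : 1 < β) {c : ℕ → ℕ} (hc : ∀ i, c i ≤ 1) {d : ℕ → ℕ}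
    (hd : IsQuasiGreedy β d) (h : ∀ n, seqLt (shiftN n c) d) : greedy β (Vv β c) = c := by
  have h0 : 0 < β := by linarith
  have hlt := Vv_lt_one hβ hc hd h
  have hmul : ∀ n, β * Vv β (shiftN n c) = c n + Vv β (shiftN (n+1) c) := by
    intro n
    have := Vv_split hβ (c := shiftN n c) (fun i => hc _) 1
    rw [shiftN_shiftN'] at this
    rw [this]
    simp [shiftN]
    field_simp
  have hfl : ∀ n, ⌊β * Vv β (shiftN n c)⌋ = (c n : ℤ) := by
    intro n
    rw [hmul, Int.floor_eq_iff]
    have h1 := hlt (n+1)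
    have h2 := Vv_nonneg hβ (shiftN (n+1) c)
    push_cast
    constructor <;> linarith
  have hT : ∀ n, (Tbeta β)^[n] (Vv β c) = Vv β (shiftN n c) := by
    intro n
    induction n with
    | zero => rfl
    | succ n ih =>
      rw [Function.iterate_succ_apply', ih, Tbeta, Int.fract, hfl, hmul]
      push_cast
      ring
  funext n
  simp only [greedy]
  rw [hT, hfl]
  simp

lemma greedy_mono {β : ℝ} (hβ : 1 < β) {a b : ℝ} (ha : 0 ≤ a) (hab : a ≤ b) :
    seqLe (greedy β a) (greedy β b) := by
  have h0 : 0 < β := by linarith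
  have nn : ∀ x : ℝ, 0 ≤ x → ∀ n, 0 ≤ (Tbeta β)^[n] x := by
    intro x hx n
    cases n with
    | zero => exact hx
    | succ n => rw [Function.iterate_succ_apply']; exact Int.fract_nonneg _
  rcases seqLe_total' (greedy β a) (greedy β b) with h | ⟨n, hn, hn'⟩
  · exact h
  exfalso
  have key : ∀ i, i ≤ n → (Tbeta β)^[i] a ≤ (Tbeta β)^[i] b := by
    intro i
    induction i with
    | zero => intro _; exact hab
    | succ i ih =>
      intro hi
      have h1 := ih (by omega)
      have h2 := hn i (by omega)
      simp only [greedy] at h2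
      have ha' : 0 ≤ ⌊β * (Tbeta β)^[i] a⌋ :=
        Int.floor_nonneg.mpr (mul_nonneg h0.le (nn a ha i))
      have hb' : 0 ≤ ⌊β * (Tbeta β)^[i] b⌋ :=
        Int.floor_nonneg.mpr (mul_nonneg h0.le (nn b (ha.trans hab) i))
      have h3 : ⌊β * (Tbeta β)^[i] a⌋ = ⌊β * (Tbeta β)^[i] b⌋ := by omega
      rw [Function.iterate_succ_apply', Function.iterate_succ_apply', Tbeta, Tbeta,
        Int.fract, Int.fract, h3]
      have := mul_le_mul_of_nonneg_left h1 h0.le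
      linarith
  have h1 := mul_le_mul_of_nonneg_left (key n le_rfl) h0.le
  have h2 := Int.toNat_le_toNat (Int.floor_mono h1)
  simp only [greedy] at hn'
  omega

lemma getD_le_one {s : List ℕ} (hs : ∀ a ∈ s, a ≤ 1) (i : ℕ) : s.getD i 0 ≤ 1 := by
  by_cases h : i < s.length
  · rw [List.getD_eq_getElem _ _ h]
    exact hs _ (List.getElem_mem h)
  · rw [List.getD_eq_default _ _ (by omega)]
    omega

lemma word_le_per (s : List ℕ) (i : ℕ) : wordSeq s i ≤ perSeq s i := by
  simp only [wordSeq, perSeq]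
  by_cases h : i < s.length
  · rw [Nat.mod_eq_of_lt h]
  · rw [List.getD_eq_default _ _ (by omega)]
    omega

lemma Vv_word {β : ℝ} (hβ : 1 < β) {s : List ℕ} (hs : ∀ a ∈ s, a ≤ 1) :
    Vv β (wordSeq s) = lyndonLeft β s := by
  rw [Vv_split hβ (c := wordSeq s) (fun i => getD_le_one hs i) s.length]
  have : shiftN s.length (wordSeq s) = fun _ => 0 := by
    funext i
    simp only [shiftN, wordSeq]
    rw [List.getD_eq_default _ _ (by omega)]
  rw [this]
  simp [Vv, lyndonLeft, wordSeq]

lemma Vv_per {β : ℝ} (hβ : 1 < β) {s : List ℕ} (hs : ∀ a ∈ s, a ≤ 1) (hne : s ≠ []) :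
    Vv β (perSeq s) = lyndonRight β s := by
  have h0 : 0 < β := by linarith
  have e := Vv_split hβ (c := perSeq s) (fun i => getD_le_one hs _) s.length
  have h1 : shiftN s.length (perSeq s) = perSeq s := by
    funext i
    simp [shiftN, perSeq]
  have h2 : ∑ i ∈ Finset.range s.length, (perSeq s i : ℝ) / β ^ (i + 1) = lyndonLeft β s := by
    apply Finset.sum_congr rfl
    intro i hi
    simp only [perSeq]
    rw [Nat.mod_eq_of_lt (Finset.mem_range.mp hi)]
  rw [h1, h2] at e
  have hp : 1 < β ^ s.length := one_lt_pow₀ hβ (by simpa using hne)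
  have hp' : β ^ s.length - 1 ≠ 0 := by linarith
  have hp0 : β ^ s.length ≠ 0 := by positivity
  unfold lyndonRight
  rw [div_mul_eq_mul_div, eq_div_iff hp']
  have e' : Vv β (perSeq s) * β ^ s.length = lyndonLeft β s * β ^ s.length + Vv β (perSeq s) := by
    conv_lhs => rw [e]
    rw [add_mul, div_mul_cancel₀ _ hp0]
  linarith

lemma per_le_of_word_le {s : List ℕ} {x : ℕ → ℕ}
    (h : ∀ n, seqLe (wordSeq s) (shiftN n x)) (hne : s ≠ []) (n : ℕ) :
    seqLe (perSeq s) (shiftN n x) := by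
  have hp : 0 < s.length := List.length_pos_iff.mpr hne
  have key : ∀ j n, (∀ i, i < j → x (i + n) = perSeq s i) → x (j + n) < perSeq s j → False := by
    intro j
    induction j using Nat.strong_induction_on with
    | _ j ih =>
      intro n h1 h2
      by_cases hj : j < s.length
      · have hw : ∀ i, i < s.length → perSeq s i = wordSeq s i := fun i hi => by
          simp only [perSeq, wordSeq]
          rw [Nat.mod_eq_of_lt hi]
        have : seqLt (shiftN n x) (wordSeq s) :=
          ⟨j, fun i hi => (h1 i hi).trans (hw i (hi.trans hj)), by rw [← hw j hj]; exact h2⟩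
        exact seqLt_irrefl' (seqLe_lt_trans' (h n) this)
      · have hper : ∀ i, perSeq s (i + s.length) = perSeq s i := fun i => by simp [perSeq]
        refine ih (j - s.length) (by omega) (n + s.length) (fun i hi => ?_) ?_
        · have := h1 (i + s.length) (by omega)
          rw [hper] at this
          rw [← this]
          congr 1
          omega
        · rw [← hper, Nat.sub_add_cancel (by omega)]
          convert h2 using 2
          omega
  rcases seqLe_total' (perSeq s) (shiftN n x) with h1 | ⟨j, h1, h2⟩
  · exact h1
  · exact (key j n h1 h2).elim

/-- Let `β ∈ (1,2)` with `δ(β) = (1^m 0)^∞` for some `m ≥ 1` and let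
`[t_L, t_R) ⊆ [0, 1 - 1/β)` be a β-Lyndon interval. Then `t ↦ K̃_β(t)` is constant
on `[t_L, t_R]`; in particular `K̃_β(t) = K̃_β(t_L) = K̃_β(t_R)` on `[t_L, t_R]`. -/
theorem stmt_5 (β : ℝ) (hβ : β ∈ Set.Ioo (1 : ℝ) 2) (m : ℕ) (hm : 1 ≤ m)
    (hδ : IsQuasiGreedy β (perSeq (List.replicate m 1 ++ [0])))
    (s : List ℕ) (hs : IsBetaLyndon β s)
    (hsub : Set.Ico (lyndonLeft β s) (lyndonRight β s) ⊆ Set.Ico (0 : ℝ) (1 - 1 / β)) :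
    ∀ t ∈ Set.Icc (lyndonLeft β s) (lyndonRight β s),
      Ktilde β t (perSeq (List.replicate m 1 ++ [0])) =
        Ktilde β (lyndonLeft β s) (perSeq (List.replicate m 1 ++ [0])) ∧
      Ktilde β t (perSeq (List.replicate m 1 ++ [0])) =
        Ktilde β (lyndonRight β s) (perSeq (List.replicate m 1 ++ [0])) := by 
  have hβ1 : 1 < β := hβ.1
  obtain ⟨hne, hdig, -, hlt⟩ := hs
  have hltp := hlt _ hδ
  have hltw : ∀ n, seqLt (shiftN n (wordSeq s)) (perSeq (List.replicate m 1 ++ [0])) := fun n =>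
    seqLe_lt_trans' (seqLe_of_le' fun i => word_le_per s _) (hltp n)
  have gL : greedy β (lyndonLeft β s) = wordSeq s := by
    rw [← Vv_word hβ1 hdig]
    exact greedy_Vv hβ1 (fun i => getD_le_one hdig i) hδ hltw
  have gR : greedy β (lyndonRight β s) = perSeq s := by
    rw [← Vv_per hβ1 hdig hne]
    exact greedy_Vv hβ1 (fun i => getD_le_one hdig _) hδ hltp
  have hL0 : 0 ≤ lyndonLeft β s := by
    rw [← Vv_word hβ1 hdig]
    exact Vv_nonneg hβ1 _
  intro t ht
  have m1 := greedy_mono hβ1 hL0 ht.1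
  have m2 := greedy_mono hβ1 (hL0.trans ht.1) ht.2
  have s1 : Ktilde β (lyndonRight β s) (perSeq (List.replicate m 1 ++ [0])) ⊆
      Ktilde β t (perSeq (List.replicate m 1 ++ [0])) := fun x hx =>
    ⟨hx.1, fun n => ⟨seqLe_trans' m2 (hx.2 n).1, (hx.2 n).2⟩⟩
  have s2 : Ktilde β t (perSeq (List.replicate m 1 ++ [0])) ⊆
      Ktilde β (lyndonLeft β s) (perSeq (List.replicate m 1 ++ [0])) := fun x hx =>
    ⟨hx.1, fun n => ⟨seqLe_trans' m1 (hx.2 n).1, (hx.2 n).2⟩⟩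
  have s3 : Ktilde β (lyndonLeft β s) (perSeq (List.replicate m 1 ++ [0])) ⊆
      Ktilde β (lyndonRight β s) (perSeq (List.replicate m 1 ++ [0])) := fun x hx => by
    refine ⟨hx.1, fun n => ⟨?_, (hx.2 n).2⟩⟩
    rw [gR]
    refine per_le_of_word_le (fun k => ?_) hne n
    rw [← gL]
    exact (hx.2 k).1
  exact ⟨s2.antisymm (s3.trans s1), (s2.trans s3).antisymm s1⟩
end

section
/- Let (t_1…t_N)^∞ ∈ {0,1}^ℕ be a periodic sequence whose minimal period is N ≥ 2. If σ^n((t_1…t_N)^∞) ≽ (t_1…t_N)^∞ for all n ≥ 0, then t_{j+1}…t_N ≻ t_1…t_{N−j} for all 1 ≤ j < N. -/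
open Set Filter MeasureTheory

/-- Let `(t_1…t_N)^∞ ∈ {0,1}^ℕ` have minimal period `N ≥ 2`.
If `σ^n((t_1…t_N)^∞) ≽ (t_1…t_N)^∞` for all `n ≥ 0`, then
`t_{j+1}…t_N ≻ t_1…t_{N-j}` for all `1 ≤ j < N`. -/
theorem stmt_7 (w : List ℕ) (hlen : 2 ≤ w.length) (hbin : ∀ a ∈ w, a ≤ 1)
    (hmin : ∀ k, 0 < k → k < w.length → shiftN k (perSeq w) ≠ perSeq w)
    (h : ∀ n : ℕ, seqLe (perSeq w) (shiftN n (perSeq w))) :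
    ∀ j, 1 ≤ j → j < w.length →
      seqLt (wordSeq (w.take (w.length - j))) (wordSeq (w.drop j)) := by 
  intro j hj1 hj2
  have hper : ∀ i, perSeq w (i + w.length) = perSeq w i := by
    intro i; simp [perSeq]
  have hval : ∀ i, i < w.length → perSeq w i = w.getD i 0 := by
    intro i hi; simp [perSeq, Nat.mod_eq_of_lt hi]
  have hA : ∀ i, i < w.length - j → wordSeq (w.take (w.length - j)) i = perSeq w i := by
    intro i hi
    rw [hval i (by omega)]
    simp only [wordSeq, List.getD_eq_getElem?_getD, List.getElem?_take, hi, if_true]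
  have hB : ∀ i, i < w.length - j → wordSeq (w.drop j) i = perSeq w (i + j) := by
    intro i hi
    rw [hval (i + j) (by omega)]
    simp [wordSeq, List.getD_eq_getElem?_getD, List.getElem?_drop, Nat.add_comm]
  rcases h j with he | ⟨n, hn1, hn2⟩
  · exact absurd he.symm (hmin j (by omega) hj2)
  simp only [shiftN] at hn1 hn2
  by_cases hn : n < w.length - j
  · refine ⟨n, fun i hi => ?_, ?_⟩
    · rw [hA i (by omega), hB i (by omega)]; exact hn1 i hi
    · rw [hA n hn, hB n hn]; exact hn2
  exfalso
  obtain ⟨m, rfl⟩ : ∃ m, n = m + (w.length - j) := ⟨n - (w.length - j), by omega⟩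
  have e : ∀ i, perSeq w (i + (w.length - j) + j) = perSeq w i := by
    intro i
    rw [show i + (w.length - j) + j = i + w.length by omega, hper]
  rw [e] at hn2
  have hlow : ∀ i, i < m → perSeq w (i + (w.length - j)) = perSeq w i := by
    intro i hi
    rw [hn1 _ (by omega), e]
  rcases h (w.length - j) with he | ⟨k, hk1, hk2⟩
  · have := congrFun he m
    simp only [shiftN] at this
    omega
  simp only [shiftN] at hk1 hk2
  rcases lt_trichotomy k m with hkm | hkm | hkm
  · have := hlow k hkm
    omega
  · subst hkm; omega
  · have := hk1 m hkm
    omega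
end

section
/- Let β ∈ (1,2) with δ(β) = (1^m 0)^∞ for some m ≥ 1. Then [0, 1 − 1/β) \ ⋃ [t_L, t_R) ⊆ E_β, where the union is over all β-Lyndon intervals; i.e., every t ∈ [0, 1 − 1/β) lying in no β-Lyndon interval belongs to E_β. -/
open Set Filter MeasureTheory

lemma gd_nonneg {β x : ℝ} (hx : 0 ≤ x) (n : ℕ) : 0 ≤ (Tbeta β)^[n] x := by
  cases n with
  | zero => simpa using hx
  | succ n => rw [Function.iterate_succ_apply']; exact Int.fract_nonneg _

lemma gd_lt_one {β x : ℝ} (hx : x < 1) (n : ℕ) : (Tbeta β)^[n] x < 1 := by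
  cases n with
  | zero => simpa using hx
  | succ n => rw [Function.iterate_succ_apply']; exact Int.fract_lt_one _

lemma gd_step {β x : ℝ} (hβ : 1 < β) (hx : 0 ≤ x) (n : ℕ) :
    (greedy β x n : ℝ) + (Tbeta β)^[n+1] x = β * (Tbeta β)^[n] x := by
  rw [Function.iterate_succ_apply', greedy]
  have h := gd_nonneg (β := β) hx n
  have h2 : 0 ≤ ⌊β * (Tbeta β)^[n] x⌋ := Int.floor_nonneg.2 (by positivity)
  have h3 : (((⌊β * (Tbeta β)^[n] x⌋).toNat : ℕ) : ℝ) = ((⌊β * (Tbeta β)^[n] x⌋ : ℤ) : ℝ) := by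
    exact_mod_cast congrArg (Int.cast (R := ℝ)) (Int.toNat_of_nonneg h2)
  rw [h3, Tbeta, Int.floor_add_fract]

lemma gd_le_one {β x : ℝ} (hβ : 1 < β) (hβ2 : β < 2) (hx : 0 ≤ x) (hx1 : x < 1) (n : ℕ) :
    greedy β x n ≤ 1 := by
  have h := gd_step hβ hx n
  have h1 := gd_nonneg (β := β) hx (n+1)
  have h2 := gd_lt_one (β := β) hx1 n
  have h3 := gd_nonneg (β := β) hx n
  have : (greedy β x n : ℝ) < 2 := by nlinarith
  have : greedy β x n < 2 := by exact_mod_cast this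
  omega

lemma gd_sum {β x : ℝ} (hβ : 1 < β) (hx : 0 ≤ x) (k n : ℕ) :
    (Tbeta β)^[k] x = ∑ i ∈ Finset.range n, (greedy β x (k + i) : ℝ) / β ^ (i + 1)
      + (Tbeta β)^[k + n] x / β ^ n := by
  have hb : 0 < β := by linarith
  induction n with
  | zero => simp
  | succ n ih =>
    rw [Finset.sum_range_succ, ih]
    have h := gd_step hβ hx (k + n)
    have : (Tbeta β)^[k + n] x / β ^ n = (β * (Tbeta β)^[k+n] x) / β ^ (n+1) := by
      field_simp
      ring
    rw [this, ← h, ← add_assoc k n 1]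
    ring

lemma seqLt_le_trans {x y z : ℕ → ℕ} (h : seqLt x y) (h' : seqLe y z) : seqLt x z := by
  rcases h' with rfl | ⟨k, hk, hk'⟩
  · exact h
  · obtain ⟨n, hn, hn'⟩ := h
    rcases lt_trichotomy n k with h | h | h
    · exact ⟨n, fun i hi => (hn i hi).trans (hk i (by omega)), by rw [← hk n h]; exact hn'⟩
    · subst h
      exact ⟨n, fun i hi => (hn i hi).trans (hk i (by omega)), by omega⟩
    · exact ⟨k, fun i hi => (hn i (by omega)).trans (hk i (by omega)), by rw [hn k h]; exact hk'⟩

lemma perD (m i : ℕ) : perSeq (List.replicate m 1 ++ [0]) i = if i % (m+1) < m then 1 else 0 := by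
  have h : i % (m+1) < m + 1 := Nat.mod_lt _ (by omega)
  simp only [perSeq, List.length_append, List.length_replicate, List.length_singleton]
  split_ifs with h1
  · simp [List.getD, List.getElem?_append, h1]
  · have : i % (m+1) = m := by omega
    simp [List.getD, this]

lemma sum_one {β : ℝ} {m : ℕ}
    (h : ∑' i : ℕ, (perSeq (List.replicate m 1 ++ [0]) i : ℝ) / β ^ (i + 1) = 1) :
    ∑ i ∈ Finset.range (m+1), 1 / β ^ (i + 1) = 1 := by
  have hs : Summable fun i : ℕ => (perSeq (List.replicate m 1 ++ [0]) i : ℝ) / β ^ (i + 1) := by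
    by_contra hc
    rw [tsum_eq_zero_of_not_summable hc] at h
    norm_num at h
  have h2 := hs.sum_add_tsum_nat_add (m+1)
  have h3 : ∀ i : ℕ, (perSeq (List.replicate m 1 ++ [0]) (i + (m+1)) : ℝ) / β ^ (i + (m+1) + 1)
      = (perSeq (List.replicate m 1 ++ [0]) i : ℝ) / β ^ (i + 1) * (1 / β ^ (m+1)) := by
    intro i
    rw [perD, perD, Nat.add_mod_right, show i + (m+1) + 1 = (i+1) + (m+1) by ring, pow_add]
    rw [div_mul_div_comm, mul_one]
  simp_rw [h3] at h2
  rw [tsum_mul_right, h, Finset.sum_range_succ] at h2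
  rw [Finset.sum_range_succ]
  have h4 : (perSeq (List.replicate m 1 ++ [0]) m : ℝ) = 0 := by
    rw [perD]; simp
  rw [h4] at h2
  have : ∀ i ∈ Finset.range m, (perSeq (List.replicate m 1 ++ [0]) i : ℝ) / β ^ (i + 1)
      = 1 / β ^ (i+1) := by
    intro i hi
    have hi := Finset.mem_range.1 hi
    rw [perD, Nat.mod_eq_of_lt (by omega), if_pos hi]; simp
  rw [Finset.sum_congr rfl this] at h2
  rw [zero_div, add_zero, one_mul] at h2
  exact h2

/-- Sequences without `m+1` consecutive ones are below `(1^m 0)^∞` or equal to it. -/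
lemma lt_or_eq_D {m : ℕ} {x : ℕ → ℕ} (hx : ∀ i, x i ≤ 1)
    (hrun : ∀ k, ∃ i, i ≤ m ∧ x (k + i) = 0)
    (hn : ¬ seqLt x (perSeq (List.replicate m 1 ++ [0]))) (i : ℕ) :
    x i = if i % (m+1) < m then 1 else 0 := by
  induction i using Nat.strong_induction_on with
  | _ i ih =>
    have hge : ¬ x i < perSeq (List.replicate m 1 ++ [0]) i := by
      intro hc
      exact hn ⟨i, fun j hj => by rw [perD]; exact ih j hj, hc⟩
    rw [perD] at hge
    have h1 := hx i
    split_ifs at hge ⊢ with h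
    · omega
    · have hlt : i % (m+1) < m + 1 := Nat.mod_lt _ (by omega)
      have hm : i % (m+1) = m := by omega
      have hd := Nat.div_add_mod i (m+1)
      obtain ⟨j, hj, hj0⟩ := hrun ((m+1) * (i / (m+1)))
      rcases Nat.lt_or_ge j m with hjm | hjm
      · rw [ih _ (by omega), Nat.mul_add_mod, Nat.mod_eq_of_lt (by omega), if_pos hjm] at hj0
        omega
      · have : j = m := by omega
        subst this
        rw [← hm] at hj0
        conv at hj0 => lhs; rw [show (i % (j+1) + 1) = j + 1 by omega]
        rw [hd] at hj0
        exact hj0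

lemma survivor (β : ℝ) (hβ : β ∈ Set.Ioo (1 : ℝ) 2) (m : ℕ) (hm : 1 ≤ m)
    (hδ : IsQuasiGreedy β (perSeq (List.replicate m 1 ++ [0]))) (t : ℝ) (ht0 : 0 ≤ t)
    (ht : t < 1 - 1 / β) (hl : t ∉ lyndonUnionIco β) (N : ℕ) : t ≤ (Tbeta β)^[N] t := by
  obtain ⟨hβ1, hβ2⟩ := hβ
  have hb : 0 < β := by linarith
  have hib : 0 < 1 / β := by positivity
  have ht1 : t < 1 := by linarith
  by_contra! hN
  have hex : ∃ N, (Tbeta β)^[N] t < t := ⟨N, hN⟩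
  classical
  obtain ⟨n, hn, hmin⟩ : ∃ n, (Tbeta β)^[n] t < t ∧ ∀ k < n, t ≤ (Tbeta β)^[k] t :=
    ⟨Nat.find hex, Nat.find_spec hex, fun k hk => not_lt.1 (Nat.find_min hex hk)⟩
  have hn0 : 0 < n := by
    rcases Nat.eq_zero_or_pos n with h | h
    · subst h; simp at hn
    · exact h
  set b := greedy β t with hbdef
  have hb1 : ∀ i, b i ≤ 1 := gd_le_one hβ1 hβ2 ht0 ht1
  set s : List ℕ := (List.range n).map b with hs
  have hlen : s.length = n := by simp [hs]
  have hsget : ∀ i, i < n → s.getD i 0 = b i := by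
    intro i hi
    simp [hs, List.getD, hi]
  have hsum1 := sum_one hδ.2.2.1
  have hrunb : ∀ k, ∃ i, i ≤ m ∧ b (k + i) = 0 := by
    intro k
    by_contra! hc
    have h := gd_sum hβ1 ht0 k (m+1)
    have h1 := gd_lt_one (β := β) ht1 k
    have h2 := gd_nonneg (β := β) ht0 (k + (m+1))
    have h3 : ∑ i ∈ Finset.range (m+1), (greedy β t (k + i) : ℝ) / β ^ (i + 1) = 1 := by
      rw [← hsum1]
      refine Finset.sum_congr rfl fun i hi => ?_
      have hi := Finset.mem_range.1 hi
      have : b (k + i) = 1 := by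
        have := hc i (by omega); have := hb1 (k+i); omega
      rw [← hbdef, this]; simp
    have h4 : 0 ≤ (Tbeta β)^[k + (m+1)] t / β ^ (m+1) := by positivity
    linarith
  have hb0 : b 0 = 0 := by
    have h := gd_step hβ1 ht0 0
    have h1 := gd_nonneg (β := β) ht0 1
    simp only [Function.iterate_zero, id] at h
    have h2 : β * t < β * (1 - 1/β) := by gcongr
    have h3 : β * (1 - 1/β) = β - 1 := by field_simp
    have h4 : (b 0 : ℝ) < 1 := by
      simp only [zero_add] at h
      linarith
    have : b 0 < 1 := by exact_mod_cast h4
    omega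
  -- the word is β-Lyndon
  have hLyn : IsBetaLyndon β s := by
    refine ⟨?_, ?_, ?_, ?_⟩
    · intro h; rw [h] at hlen; simp at hlen; omega
    · intro a ha
      simp only [hs, List.mem_map] at ha
      obtain ⟨i, _, rfl⟩ := ha
      exact hb1 i
    · intro i hi1 hin
      rw [hlen] at hin ⊢
      have hw1 : ∀ j, j < n - i → wordSeq (s.take (n - i)) j = b j := by
        intro j hj
        rw [← hsget j (by omega)]
        simp [wordSeq, List.getD, List.getElem?_take, hj]
      have hw2 : ∀ j, j < n - i → wordSeq (s.drop i) j = b (i + j) := by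
        intro j hj
        rw [← hsget (i+j) (by omega)]
        simp [wordSeq, List.getD, List.getElem?_drop]
      have key : ∀ k, k ≤ n - i → (∀ j < k, b j = b (i + j)) →
          (Tbeta β)^[k] t ≤ (Tbeta β)^[i + k] t := by
        intro k hk hj
        have h1 := gd_sum hβ1 ht0 0 k
        have h2 := gd_sum hβ1 ht0 i k
        have h3 := hmin i hin
        have h4 : ∑ j ∈ Finset.range k, (greedy β t (0 + j) : ℝ) / β ^ (j + 1)
            = ∑ j ∈ Finset.range k, (greedy β t (i + j) : ℝ) / β ^ (j + 1) := by
          refine Finset.sum_congr rfl fun j hj' => ?_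
          rw [← hbdef, zero_add, hj j (Finset.mem_range.1 hj')]
        simp only [Function.iterate_zero, id] at h1
        rw [zero_add] at h1
        have h5 : (Tbeta β)^[k] t / β ^ k ≤ (Tbeta β)^[i + k] t / β ^ k := by linarith
        exact (div_le_div_iff_of_pos_right (by positivity)).1 h5
      have hdiff : ∃ j, j < n - i ∧ b j ≠ b (i + j) := by
        by_contra! hc
        have h1 := key (n - i) le_rfl hc
        rw [show i + (n - i) = n by omega] at h1
        have h2 := hmin (n - i) (by omega)
        linarith
      obtain ⟨j, ⟨hj1, hj2⟩, hj3⟩ : ∃ j, (j < n - i ∧ b j ≠ b (i + j)) ∧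
          ∀ k < j, ¬ (k < n - i ∧ b k ≠ b (i + k)) :=
        ⟨Nat.find hdiff, Nat.find_spec hdiff, fun k hk => Nat.find_min hdiff hk⟩
      have heq : ∀ k < j, b k = b (i + k) := by
        intro k hk
        by_contra hc
        exact hj3 k hk ⟨by omega, hc⟩
      refine ⟨j, fun k hk => ?_, ?_⟩
      · rw [hw1 k (by omega), hw2 k (by omega)]; exact heq k hk
      · rw [hw1 j hj1, hw2 j hj1]
        refine lt_of_le_of_ne ?_ hj2
        have h1 := key j (by omega) heq
        simp only [hbdef, greedy]
        exact Int.toNat_le_toNat (Int.floor_le_floor (mul_le_mul_of_nonneg_left h1 hb.le))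
    · intro d hd k
      refine seqLt_le_trans ?_ (hd.2.2.2 _ hδ.1 hδ.2.1 hδ.2.2.1)
      have hp : ∀ i, perSeq s i = b (i % n) := by
        intro i
        rw [perSeq, hlen, hsget _ (Nat.mod_lt _ hn0)]
      by_contra hc
      have hx := lt_or_eq_D (m := m) (x := shiftN k (perSeq s))
        (fun i => by simp only [shiftN, hp]; exact hb1 _) ?_ hc
      · have hx' : ∀ j, b ((j + k) % n) = if j % (m+1) < m then 1 else 0 := by
          intro j
          rw [← hx j, shiftN, hp]
        have hnk : k ≤ n * k := Nat.le_mul_of_pos_left k hn0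
        have hj0 := hx' (n * k - k)
        rw [Nat.sub_add_cancel hnk, Nat.mul_mod_right, hb0] at hj0
        have hj1 : (n * k - k) % (m+1) = m := by
          have : (n * k - k) % (m+1) < m + 1 := Nat.mod_lt _ (by omega)
          split_ifs at hj0
          omega
        have hq : ∀ r, r < m → b ((1 + r) % n) = 1 := by
          intro r hr
          have h1 := hx' (n * k - k + (1 + r))
          rw [show n * k - k + (1 + r) + k = n * k + (1 + r) by omega, Nat.mul_add_mod] at h1
          have h2 : (n * k - k + (1 + r)) % (m+1) = r := by
            have := Nat.div_add_mod (n * k - k) (m+1)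
            rw [hj1] at this
            rw [← this, show (m+1) * ((n * k - k) / (m+1)) + m + (1 + r)
              = (m+1) * ((n * k - k) / (m+1) + 1) + r by ring, Nat.mul_add_mod,
              Nat.mod_eq_of_lt (by omega)]
          rw [h1, h2, if_pos hr]
        rcases Nat.lt_or_ge m n with hmn | hmn
        · have h := gd_sum hβ1 ht0 0 (m+1)
          have h2 := gd_nonneg (β := β) ht0 (0 + (m+1))
          have h4 : 0 ≤ (Tbeta β)^[0 + (m+1)] t / β ^ (m+1) := by positivity
          simp only [Function.iterate_zero, id] at h
          rw [Finset.sum_range_succ'] at h hsum1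
          have h5 : ∑ i ∈ Finset.range m, (greedy β t (0 + (i + 1)) : ℝ) / β ^ (i + 1 + 1)
              = ∑ i ∈ Finset.range m, 1 / β ^ (i + 1 + 1) := by
            refine Finset.sum_congr rfl fun i hi => ?_
            have hi := Finset.mem_range.1 hi
            have := hq i hi
            rw [Nat.mod_eq_of_lt (by omega)] at this
            rw [← hbdef, zero_add, add_comm i 1, this]; simp
          have h6 : (greedy β t (0 + 0) : ℝ) = 0 := by
            rw [← hbdef, zero_add, hb0]; simp
          rw [h5, h6] at h
          simp only [zero_add, pow_one, zero_div] at h hsum1 h4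
          linarith
        · have := hq (n - 1) (by omega)
          rw [show 1 + (n - 1) = n by omega, Nat.mod_self, hb0] at this
          omega
      · intro j
        simp only [shiftN, hp]
        by_contra! hc2
        have hlt : (j + k) % n < n := Nat.mod_lt _ hn0
        have hd := Nat.div_add_mod (j + k) n
        rcases Nat.lt_or_ge ((j + k) % n + m) n with h | h
        · obtain ⟨i, hi, hi0⟩ := hrunb ((j + k) % n)
          refine hc2 i hi ?_
          rw [show j + i + k = (j + k) + i by ring, ← hd, add_assoc, Nat.mul_add_mod,
            Nat.mod_eq_of_lt (by omega)]
          exact hi0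
        · refine hc2 (n - (j + k) % n) (by omega) ?_
          have : j + (n - (j + k) % n) + k = n * ((j + k) / n + 1) := by
            rw [mul_add, mul_one]; omega
          rw [this, Nat.mul_mod_right]
          exact hb0
  apply hl
  simp only [lyndonUnionIco, Set.mem_iUnion]
  refine ⟨s, hLyn, ?_⟩
  have hL : t = lyndonLeft β s + (Tbeta β)^[n] t / β ^ n := by
    have h := gd_sum hβ1 ht0 0 n
    simp only [Function.iterate_zero, id] at h
    rw [zero_add] at h
    rw [lyndonLeft, hlen]
    refine h.trans ?_
    congr 1
    refine Finset.sum_congr rfl fun i hi => ?_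
    rw [hsget i (Finset.mem_range.1 hi), zero_add]
  have hpow : 1 < β ^ n := one_lt_pow₀ hβ1 (by omega)
  have hT := gd_nonneg (β := β) ht0 n
  have hT2 : (Tbeta β)^[n] t / β ^ n < t / β ^ n := by gcongr
  constructor
  · have : 0 ≤ (Tbeta β)^[n] t / β ^ n := by positivity
    linarith
  · rw [lyndonRight, hlen, div_mul_eq_mul_div, lt_div_iff₀ (by linarith)]
    have h1 : t - t / β ^ n < lyndonLeft β s := by linarith
    have h2 : t * (β ^ n - 1) = β ^ n * (t - t / β ^ n) := by field_simp
    rw [h2]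
    gcongr

/-- Let `β ∈ (1,2)` with `δ(β) = (1^m 0)^∞` for some `m ≥ 1`. Then
`[0, 1 - 1/β) \ ⋃ [t_L, t_R) ⊆ E_β`, the union over all β-Lyndon intervals. -/
theorem stmt_8 (β : ℝ) (hβ : β ∈ Set.Ioo (1 : ℝ) 2) (m : ℕ) (hm : 1 ≤ m)
    (hδ : IsQuasiGreedy β (perSeq (List.replicate m 1 ++ [0]))) :
    Set.Ico (0 : ℝ) (1 - 1 / β) \ lyndonUnionIco β ⊆ Eset β := by
  rintro t ⟨⟨ht0, ht⟩, hl⟩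
  have hib : 0 < 1 / β := by have := hβ.1; positivity
  refine ⟨⟨ht0, by linarith⟩, fun t' htt' _ heq => ?_⟩
  have hmem : t ∈ Kset β t :=
    ⟨⟨ht0, by linarith⟩, survivor β hβ m hm hδ t ht0 ht hl⟩
  rw [← heq] at hmem
  have := hmem.2 0
  simp only [Function.iterate_zero, id] at this
  linarith
end

section
/- Let β ∈ (1,2) with δ(β) = (1^m 0)^∞ for some m ≥ 1, let t ∈ [0, 1 − 1/β) have greedy β-expansion (t_i), and suppose N is the smallest positive integer with T_β^N(t) < t (equivalently, with t_{N+1}t_{N+2}… ≺ (t_i)). Then t_1…t_N is a β-Lyndon word and t_1…t_N 0^∞ ≼ (t_i) ≺ (t_1…t_N)^∞; in particular t lies in the β-Lyndon interval generated by t_1…t_N. -/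
open Set Filter MeasureTheory

theorem seq_first_diff (x y : ℕ → ℕ) : x = y ∨ ∃ n, (∀ i, i < n → x i = y i) ∧ x n ≠ y n := by
  classical
  by_cases h : ∃ n, x n ≠ y n
  · right
    refine ⟨Nat.find h, fun i hi => ?_, Nat.find_spec h⟩
    have := Nat.find_min h hi
    push Not at this
    exact this
  · left
    push Not at h
    exact funext h

theorem seqLt_asymm {x y : ℕ → ℕ} (h1 : seqLt x y) (h2 : seqLt y x) : False := by
  obtain ⟨n, hn, hn'⟩ := h1
  obtain ⟨k, hk, hk'⟩ := h2
  rcases lt_trichotomy n k with h | h | h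
  · have := hk n h; omega
  · subst h; omega
  · have := hn k h; omega

theorem perDelta (m : ℕ) (i : ℕ) :
    perSeq (List.replicate m 1 ++ [0]) i = if i % (m + 1) < m then 1 else 0 := by
  unfold perSeq
  have hl : (List.replicate m 1 ++ [0]).length = m + 1 := by simp
  rw [hl]
  have h1 : i % (m + 1) < m + 1 := Nat.mod_lt _ (by omega)
  split_ifs with h
  · rw [List.getD_append _ _ _ _ (by simpa using h)]
    simp [List.getD_eq_getElem?_getD, h]
  · have : i % (m + 1) = m := by omega
    rw [this, List.getD_append_right _ _ _ _ (by simp)]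
    simp

theorem mod_period (a : ℕ → ℕ) (N n : ℕ) (hN : 0 < N) (h : ∀ i, i < n → a (i + N) = a i) :
    ∀ j, j < N + n → a j = a (j % N) := by
  intro j
  induction j using Nat.strong_induction_on with
  | _ j ih =>
    intro hj
    by_cases hjN : j < N
    · rw [Nat.mod_eq_of_lt hjN]
    · have h1 := h (j - N) (by omega)
      rw [Nat.sub_add_cancel (by omega)] at h1
      rw [h1, ih (j - N) (by omega) (by omega), Nat.mod_eq_sub_mod (by omega : j ≥ N)]

theorem delta_sum (β : ℝ) (hβ : 1 < β) (m : ℕ)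
    (h : ∑' i : ℕ, ((perSeq (List.replicate m 1 ++ [0]) i : ℕ) : ℝ) / β ^ (i + 1) = 1) :
    ∑ i ∈ Finset.range (m + 1), 1 / β ^ (i + 1) = 1 := by
  have hb : (0 : ℝ) < β := by linarith
  have hs : Summable fun i : ℕ =>
      ((perSeq (List.replicate m 1 ++ [0]) i : ℕ) : ℝ) / β ^ (i + 1) := by
    by_contra hc
    rw [tsum_eq_zero_of_not_summable hc] at h
    norm_num at h
  have h2 := hs.sum_add_tsum_nat_add (m + 1)
  have h3 : ∀ i : ℕ, ((perSeq (List.replicate m 1 ++ [0]) (i + (m + 1)) : ℕ) : ℝ)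
      / β ^ (i + (m + 1) + 1) = ((perSeq (List.replicate m 1 ++ [0]) i : ℕ) : ℝ) / β ^ (i + 1)
        * (1 / β ^ (m + 1)) := by
    intro i
    rw [perDelta, perDelta, Nat.add_mod_right]
    rw [show i + (m + 1) + 1 = (i + 1) + (m + 1) by ring, pow_add β (i + 1) (m + 1)]
    field_simp
  simp_rw [h3] at h2
  rw [tsum_mul_right, h, Finset.sum_range_succ] at h2
  rw [Finset.sum_range_succ]
  have h4 : ∑ i ∈ Finset.range m, ((perSeq (List.replicate m 1 ++ [0]) i : ℕ) : ℝ) / β ^ (i + 1)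
      = ∑ i ∈ Finset.range m, 1 / β ^ (i + 1) := by
    refine Finset.sum_congr rfl fun i hi => ?_
    have := Finset.mem_range.1 hi
    rw [perDelta, Nat.mod_eq_of_lt (by omega), if_pos this]
    simp
  rw [h4] at h2
  have h5 : perSeq (List.replicate m 1 ++ [0]) m = 0 := by
    rw [perDelta, Nat.mod_eq_of_lt (by omega)]; simp
  rw [h5] at h2
  simp at h2 ⊢
  linarith

/-- Let `β ∈ (1,2)` with `δ(β) = (1^m 0)^∞` for some `m ≥ 1`, let
`t ∈ [0, 1 - 1/β)` have greedy β-expansion `(t_i)`, and let `N` be the smallest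
positive integer with `T_β^N(t) < t`. Then `t_1…t_N` is a β-Lyndon word,
`t_1…t_N 0^∞ ≼ (t_i) ≺ (t_1…t_N)^∞`, and `t` lies in the β-Lyndon interval
generated by `t_1…t_N`. -/
theorem stmt_9 (β : ℝ) (hβ : β ∈ Set.Ioo (1 : ℝ) 2) (m : ℕ) (hm : 1 ≤ m)
    (hδ : IsQuasiGreedy β (perSeq (List.replicate m 1 ++ [0])))
    (t : ℝ) (ht : t ∈ Set.Ico (0 : ℝ) (1 - 1 / β))
    (N : ℕ) (hN : 0 < N) (hlt : (Tbeta β)^[N] t < t)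
    (hminN : ∀ k, 0 < k → k < N → ¬ (Tbeta β)^[k] t < t)
    (w : List ℕ) (hw : w = List.ofFn fun i : Fin N => greedy β t i) :
    IsBetaLyndon β w ∧ seqLe (wordSeq w) (greedy β t) ∧
      seqLt (greedy β t) (perSeq w) ∧
      t ∈ Set.Ico (lyndonLeft β w) (lyndonRight β w) := by
  obtain ⟨hβ1, hβ2⟩ := hβ
  obtain ⟨ht0, ht1⟩ := ht
  have hb : (0 : ℝ) < β := by linarith
  have hib : 0 < 1 / β := by positivity
  have hS := delta_sum β hβ1 m hδ.2.2.1
  set x : ℕ → ℝ := fun k => (Tbeta β)^[k] t with hxdef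
  set a := greedy β t with hadef
  have hx0 : x 0 = t := rfl
  have hxN : x N < t := hlt
  have hxmin : ∀ k, 0 < k → k < N → t ≤ x k := fun k h1 h2 => not_lt.1 (hminN k h1 h2)
  have hxs : ∀ k, x (k + 1) = Int.fract (β * x k) := by
    intro k
    simp only [hxdef, Function.iterate_succ_apply', Tbeta]
  have hxr : ∀ k, 0 ≤ x k ∧ x k < 1 := by
    intro k
    cases k with
    | zero => rw [hx0]; exact ⟨ht0, by linarith⟩
    | succ k => rw [hxs]; exact ⟨Int.fract_nonneg _, Int.fract_lt_one _⟩
  have hfl : ∀ k, ((a k : ℕ) : ℤ) = ⌊β * x k⌋ := by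
    intro k
    exact Int.toNat_of_nonneg (Int.floor_nonneg.2 (mul_nonneg hb.le (hxr k).1))
  have hstep : ∀ k, β * x k = a k + x (k + 1) := by
    intro k
    rw [hxs]
    have h1 := Int.floor_add_fract (β * x k)
    rw [← hfl k] at h1
    push_cast at h1
    exact h1.symm
  have ha1 : ∀ k, a k ≤ 1 := by
    intro k
    have h1 := hstep k
    have h2 := hxr k
    have h3 := hxr (k + 1)
    have h4 : (a k : ℝ) < 2 := by nlinarith
    have : a k < 2 := by exact_mod_cast h4
    omega
  have ha0 : a 0 = 0 := by
    have h1 := hstep 0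
    rw [hx0] at h1
    have h3 := hxr 1
    have h5 : β * t < β * (1 - 1 / β) := by gcongr
    have h6 : β * (1 - 1 / β) = β - 1 := by field_simp
    have h4 : (a 0 : ℝ) < 1 := by simp only [zero_add] at h1; linarith
    have : a 0 < 1 := by exact_mod_cast h4
    omega
  have hsum : ∀ k n, x k = ∑ i ∈ Finset.range n, (a (k + i) : ℝ) / β ^ (i + 1)
      + x (k + n) / β ^ n := by
    intro k n
    induction n with
    | zero => simp
    | succ n ih =>
      rw [Finset.sum_range_succ, ih]
      have h1 := hstep (k + n)
      have h2 : x (k + n) / β ^ n = (β * x (k + n)) / β ^ (n + 1) := by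
        rw [pow_succ]; field_simp
      rw [h2, h1, ← add_assoc k n 1]
      ring
  have hdiff : ∀ i j n, (∀ l, l < n → a (i + l) = a (j + l)) →
      x (i + n) - x (j + n) = β ^ n * (x i - x j) := by
    intro i j n
    induction n with
    | zero => intro _; simp
    | succ n ih =>
      intro h
      have h1 := ih fun l hl => h l (by omega)
      have h2 := hstep (i + n)
      have h3 := hstep (j + n)
      rw [h n (by omega)] at h2
      rw [pow_succ, mul_comm (β ^ n) β, mul_assoc, ← h1, ← add_assoc, ← add_assoc]
      linarith
  have hmono : ∀ i j n, x i ≤ x j → (∀ l, l < n → a (i + l) = a (j + l)) →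
      a (i + n) ≤ a (j + n) := by
    intro i j n hij h
    have h1 := hdiff i j n h
    have h2 : β ^ n * (x i - x j) ≤ 0 :=
      mul_nonpos_of_nonneg_of_nonpos (by positivity) (by linarith)
    have h3 : ⌊β * x (i + n)⌋ ≤ ⌊β * x (j + n)⌋ := by
      apply Int.floor_le_floor
      apply mul_le_mul_of_nonneg_left _ hb.le
      linarith
    rw [← hfl, ← hfl] at h3
    exact_mod_cast h3
  have hwl : w.length = N := by rw [hw]; simp
  have hwg : ∀ i, i < N → w.getD i 0 = a i := by
    intro i hi
    rw [hw, List.getD_eq_getElem _ _ (by simpa using hi)]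
    simp
  have hwz : ∀ i, N ≤ i → w.getD i 0 = 0 := by
    intro i hi
    exact List.getD_eq_default _ _ (by omega)
  have hper : ∀ i, perSeq w i = a (i % N) := by
    intro i
    unfold perSeq
    rw [hwl, hwg _ (Nat.mod_lt _ hN)]
  -- no long runs of ones
  have hrun : ∀ k, ¬ ∀ j, j ≤ m → a (k + j) = 1 := by
    intro k h
    have h1 := hsum k (m + 1)
    have h2 : ∑ i ∈ Finset.range (m + 1), (a (k + i) : ℝ) / β ^ (i + 1) = 1 := by
      rw [← hS]
      refine Finset.sum_congr rfl fun i hi => ?_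
      rw [h i (by have := Finset.mem_range.1 hi; omega)]
      simp
    have h3 : 0 ≤ x (k + (m + 1)) / β ^ (m + 1) := div_nonneg (hxr _).1 (by positivity)
    have := (hxr k).2
    linarith
  have hrunp : ∀ n, ¬ ∀ j, j ≤ m → perSeq w (n + j) = 1 := by
    intro n h
    have hr : n % N < N := Nat.mod_lt _ hN
    by_cases hc : n % N + m < N
    · apply hrun (n % N)
      intro j hj
      have h1 := h j hj
      rw [hper, ← Nat.mod_add_mod, Nat.mod_eq_of_lt (by omega)] at h1
      exact h1
    · have h1 := h (N - n % N) (by omega)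
      rw [hper, ← Nat.mod_add_mod, show n % N + (N - n % N) = N by omega, Nat.mod_self, ha0] at h1
      omega
  have hLy : IsBetaLyndon β w := by
    refine ⟨?_, ?_, ?_, ?_⟩
    · intro h
      rw [h] at hwl
      simp at hwl
      omega
    · intro b hbw
      rw [hw, List.mem_ofFn] at hbw
      obtain ⟨i, rfl⟩ := hbw
      exact ha1 _
    · intro i hi1 hi2
      rw [hwl] at hi2 ⊢
      have hT : ∀ j, j < N - i → wordSeq (w.take (N - i)) j = a j := by
        intro j hj
        unfold wordSeq
        rw [← hwg j (by omega)]
        simp [List.getD_eq_getElem?_getD, List.getElem?_take, hj]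
      have hD : ∀ j, j < N - i → wordSeq (w.drop i) j = a (i + j) := by
        intro j hj
        unfold wordSeq
        rw [← hwg (i + j) (by omega)]
        simp [List.getD_eq_getElem?_getD, List.getElem?_drop]
      have hxi := hxmin i (by omega) hi2
      have hex : ∃ n, (n < N - i ∧ a (0 + n) ≠ a (i + n)) := by
        by_contra hc
        push Not at hc
        have h1 := hdiff 0 i (N - i) hc
        have h2 : β ^ (N - i) * (x 0 - x i) ≤ 0 :=
          mul_nonpos_of_nonneg_of_nonpos (by positivity) (by rw [hx0]; linarith)
        rw [show i + (N - i) = N by omega, zero_add] at h1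
        have h3 := hxmin (N - i) (by omega) (by omega)
        linarith
      classical
      have hsp := Nat.find_spec hex
      have hmn : ∀ l, l < Nat.find hex → a (0 + l) = a (i + l) := by
        intro l hl
        by_contra hne
        exact Nat.find_min hex hl ⟨by omega, hne⟩
      refine ⟨Nat.find hex, fun l hl => ?_, ?_⟩
      · rw [hT l (by omega), hD l (by omega), ← hmn l hl, zero_add]
      · rw [hT _ hsp.1, hD _ hsp.1]
        have h1 := hmono 0 i _ hxi hmn
        have h2 := hsp.2
        rw [zero_add] at h1 h2
        omega
    · intro d hd n
      have hdd : d = perSeq (List.replicate m 1 ++ [0]) := by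
        have h1 := hd.2.2.2 _ hδ.1 hδ.2.1 hδ.2.2.1
        have h2 := hδ.2.2.2 _ hd.1 hd.2.1 hd.2.2.1
        rcases h1 with h1 | h1
        · exact h1.symm
        · rcases h2 with h2 | h2
          · exact h2
          · exact (seqLt_asymm h1 h2).elim
      rw [hdd]
      rcases seq_first_diff (shiftN n (perSeq w)) (perSeq (List.replicate m 1 ++ [0])) with h | h
      · exfalso
        have he : ∀ i, a ((i + n) % N) = if i % (m + 1) < m then 1 else 0 := by
          intro i
          rw [← perDelta, ← h, ← hper]
          rfl
        have hi0 : (N - 1) * n + n = N * n := by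
          obtain ⟨N', rfl⟩ : ∃ N', N = N' + 1 := ⟨N - 1, by omega⟩
          simp; ring
        have h1 := he ((N - 1) * n)
        rw [hi0, Nat.mul_mod_right, ha0] at h1
        have h2 : ((N - 1) * n) % (m + 1) = m := by
          have := Nat.mod_lt ((N - 1) * n) (show 0 < m + 1 by omega)
          split_ifs at h1
          omega
        have h3 : ∀ j, j < m → a ((1 + j) % N) = 1 := by
          intro j hj
          have h4 := he ((N - 1) * n + (1 + j))
          rw [show (N - 1) * n + (1 + j) + n = (1 + j) + N * n by omega,
            Nat.add_mul_mod_self_left, ← Nat.mod_add_mod ((N - 1) * n) (m + 1), h2,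
            show m + (1 + j) = j + (m + 1) by omega, Nat.add_mod_right,
            Nat.mod_eq_of_lt (by omega : j < m + 1), if_pos hj] at h4
          exact h4
        have h5 : m < N := by
          by_contra hc
          have h6 := h3 (N - 1) (by omega)
          rw [show 1 + (N - 1) = N by omega, Nat.mod_self, ha0] at h6
          omega
        have h7 : ∀ j, j < m → a (1 + j) = 1 := by
          intro j hj
          have := h3 j hj
          rwa [Nat.mod_eq_of_lt (by omega)] at this
        have h8 := hsum 1 m
        have h9 : ∑ i ∈ Finset.range m, (a (1 + i) : ℝ) / β ^ (i + 1)
            = ∑ i ∈ Finset.range m, 1 / β ^ (i + 1) := by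
          refine Finset.sum_congr rfl fun i hi => ?_
          rw [h7 i (Finset.mem_range.1 hi)]
          simp
        rw [h9] at h8
        have h10 : 0 ≤ x (1 + m) / β ^ m := div_nonneg (hxr _).1 (by positivity)
        have h11 := hstep 0
        rw [hx0, ha0] at h11
        simp only [zero_add, Nat.cast_zero] at h11
        have h12 : ∑ i ∈ Finset.range (m + 1), 1 / β ^ (i + 1)
            = 1 / β + (1 / β) * ∑ i ∈ Finset.range m, 1 / β ^ (i + 1) := by
          rw [Finset.sum_range_succ', Finset.mul_sum, add_comm]
          congr 1
          · simp
          · refine Finset.sum_congr rfl fun i _ => ?_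
            rw [pow_succ β (i + 1)]
            field_simp
        rw [hS] at h12
        have h13 : t = (1 / β) * x 1 := by rw [← h11]; field_simp
        have h14 : (1 / β) * ∑ i ∈ Finset.range m, 1 / β ^ (i + 1) ≤ (1 / β) * x 1 :=
          mul_le_mul_of_nonneg_left (by linarith) hib.le
        linarith
      · obtain ⟨k, hk, hkne⟩ := h
        refine ⟨k, hk, ?_⟩
        have hp1 : ∀ i, shiftN n (perSeq w) i ≤ 1 := by
          intro i
          unfold shiftN
          rw [hper]
          exact ha1 _
        have hp1k := hp1 k
        rw [perDelta] at hkne ⊢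
        split_ifs at hkne ⊢ with hc
        · omega
        · exfalso
          have hmk : k % (m + 1) = m := by
            have := Nat.mod_lt k (show 0 < m + 1 by omega)
            omega
          have hkm : m ≤ k := by rw [← hmk]; exact Nat.mod_le _ _
          apply hrunp (k - m + n)
          intro j hj
          by_cases hjm : j = m
          · subst hjm
            have : shiftN n (perSeq w) k = perSeq w (k - j + n + j) := by
              unfold shiftN
              congr 1
              omega
            omega
          · have h1 := hk (k - m + j) (by omega)
            have h2 : shiftN n (perSeq w) (k - m + j) = perSeq w (k - m + n + j) := by
              unfold shiftN
              congr 1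
              omega
            rw [← h2, h1, perDelta, if_pos]
            have h3 : (k - m) % (m + 1) = 0 := by
              have h4 := Nat.div_add_mod k (m + 1)
              rw [hmk] at h4
              rw [show k - m = (m + 1) * (k / (m + 1)) by omega, Nat.mul_mod_right]
            rw [← Nat.mod_add_mod, h3, zero_add, Nat.mod_eq_of_lt (by omega)]
            omega
  have hleft : lyndonLeft β w = ∑ i ∈ Finset.range N, (a (0 + i) : ℝ) / β ^ (i + 1) := by
    unfold lyndonLeft
    rw [hwl]
    refine Finset.sum_congr rfl fun i hi => ?_
    rw [hwg i (Finset.mem_range.1 hi), zero_add]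
  have htN := hsum 0 N
  rw [← hleft, hx0, zero_add] at htN
  have hpN : 1 < β ^ N := one_lt_pow₀ hβ1 (by omega)
  refine ⟨hLy, ?_, ?_, ?_, ?_⟩
  · rcases seq_first_diff (wordSeq w) a with h | ⟨n, hn, hne⟩
    · exact Or.inl h
    · right
      refine ⟨n, hn, ?_⟩
      unfold wordSeq at hne ⊢
      by_cases hc : n < N
      · exact absurd (hwg n hc) hne
      · rw [hwz n (by omega)] at hne ⊢
        omega
  · rcases seq_first_diff (fun i => a (N + i)) (fun i => a (0 + i)) with h | ⟨n, hn, hne⟩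
    · exfalso
      obtain ⟨n, hn⟩ := pow_unbounded_of_one_lt (1 / (t - x N)) hβ1
      have h1 := hdiff N 0 n fun l _ => congrFun h l
      rw [hx0] at h1
      have h2 := hxr (N + n)
      have h3 := hxr (0 + n)
      have h4 : 0 < t - x N := by linarith
      rw [div_lt_iff₀ h4] at hn
      nlinarith
    · have h1 := hmono N 0 n (by rw [hx0]; linarith) hn
      have h2 := mod_period a N n hN (fun i hi => by
        have := hn i hi
        simp only [zero_add] at this
        rwa [add_comm])
      refine ⟨N + n, fun i hi => ?_, ?_⟩
      · rw [hper]
        exact h2 i hi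
      · rw [hper, Nat.add_mod_left, ← h2 n (by omega)]
        rw [zero_add] at h1 hne
        omega
  · have : 0 ≤ x N / β ^ N := div_nonneg (hxr _).1 (by positivity)
    linarith
  · unfold lyndonRight
    rw [hwl, div_mul_eq_mul_div, lt_div_iff₀ (by linarith)]
    have h1 : β ^ N * t = β ^ N * lyndonLeft β w + x N := by
      conv_lhs => rw [htN]
      field_simp
    nlinarith
end
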